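/- The monoid T is finite and its cardinality equals Σ (over all non-negative integers k, m, t with 2k + 2m + t ≤ n) of c(m)·(n!)² / (k!·2^k·(t+2m)!·(k+m)!·2^{k+m}·t!·(n−2k−2m−t)!), where c(m) = 1 if m = 0 and c(m) = 2 if m > 0 (each quotient being an exact natural-number division). (This is the cardinality form of the theorem that T is isomorphic, via σ_i ↦ s_i, θ_i ↦ π_i, ϑ_i ↦ ς_i, to the partial Brauer monoid P𝔅_n.) -/

import Mathlib

/-!
The presentation of the partial Brauer monoid `P𝔅_n` from Kudryavtseva–Mazorchuk,
Section 5.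

Generators: `Sum.inl i` represents `σ_{i+1}` and `Sum.inr (Sum.inl i)` represents
`θ_{i+1}` for `i : Fin (n-1)`, while `Sum.inr (Sum.inr j)` represents `ϑ_{j+1}`
for `j : Fin n` (the paper's indices are `i.val + 1`, `j.val + 1`).
-/

/-- Generator type: `σ_{i+1}`, `θ_{i+1}` (`i : Fin (n-1)`) and `ϑ_{j+1}` (`j : Fin n`). -/
abbrev PBGen (n : ℕ) := Fin (n - 1) ⊕ (Fin (n - 1) ⊕ Fin n)

/-- The word `σ_{i+1}` in the free monoid. -/
def fσ {n : ℕ} (i : Fin (n - 1)) : FreeMonoid (PBGen n) := FreeMonoid.of (Sum.inl i)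

/-- The word `θ_{i+1}` in the free monoid. -/
def fθ {n : ℕ} (i : Fin (n - 1)) : FreeMonoid (PBGen n) := FreeMonoid.of (Sum.inr (Sum.inl i))

/-- The word `ϑ_{j+1}` in the free monoid. -/
def fϑ {n : ℕ} (j : Fin n) : FreeMonoid (PBGen n) := FreeMonoid.of (Sum.inr (Sum.inr j))

/-- The point `i` of `{1, …, n}` (0-based: `i.val`). -/
def lo {n : ℕ} (i : Fin (n - 1)) : Fin n := ⟨i.1, by have := i.2; omega⟩

/-- The point `i + 1` of `{1, …, n}` (0-based: `i.val + 1`). -/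
def hi {n : ℕ} (i : Fin (n - 1)) : Fin n := ⟨i.1 + 1, by have := i.2; omega⟩

/-- The defining relations of the presentation of the partial Brauer monoid `P𝔅_n`:
the Brauer relations for `σ, θ`, the symmetric-inverse-monoid relations for `σ, ϑ`,
and the mixed relations for `θ, ϑ`. -/
inductive PBRel (n : ℕ) : FreeMonoid (PBGen n) → FreeMonoid (PBGen n) → Prop
  | sigma_sq (i) : PBRel n (fσ i * fσ i) 1
  | sigma_comm (i j) (h : 1 < Nat.dist i.1 j.1) : PBRel n (fσ i * fσ j) (fσ j * fσ i)
  | braid (i j) (h : Nat.dist i.1 j.1 = 1) :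
      PBRel n (fσ i * fσ j * fσ i) (fσ j * fσ i * fσ j)
  | theta_idem (i) : PBRel n (fθ i * fθ i) (fθ i)
  | theta_comm (i j) (h : 1 < Nat.dist i.1 j.1) : PBRel n (fθ i * fθ j) (fθ j * fθ i)
  | theta_theta_theta (i j) (h : Nat.dist i.1 j.1 = 1) : PBRel n (fθ i * fθ j * fθ i) (fθ i)
  | theta_sigma (i) : PBRel n (fθ i * fσ i) (fθ i)
  | sigma_theta (i) : PBRel n (fσ i * fθ i) (fθ i)
  | theta_sigma_comm (i j) (h : 1 < Nat.dist i.1 j.1) : PBRel n (fθ i * fσ j) (fσ j * fθ i)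
  | sigma_theta_theta (i j) (h : Nat.dist i.1 j.1 = 1) :
      PBRel n (fσ i * fθ j * fθ i) (fσ j * fθ i)
  | theta_theta_sigma (i j) (h : Nat.dist i.1 j.1 = 1) :
      PBRel n (fθ i * fθ j * fσ i) (fθ i * fσ j)
  | v_idem (j) : PBRel n (fϑ j * fϑ j) (fϑ j)
  | v_comm (j j') (h : j ≠ j') : PBRel n (fϑ j * fϑ j') (fϑ j' * fϑ j)
  | sigma_v (i) : PBRel n (fσ i * fϑ (lo i)) (fϑ (hi i) * fσ i)
  | sigma_v_comm (i j) (h : j ≠ lo i) (h' : j ≠ hi i) : PBRel n (fσ i * fϑ j) (fϑ j * fσ i)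
  | v_sigma_v (i) : PBRel n (fϑ (lo i) * fσ i * fϑ (lo i)) (fϑ (lo i) * fϑ (hi i))
  | theta_v_comm (i j) (h : j ≠ lo i) (h' : j ≠ hi i) : PBRel n (fθ i * fϑ j) (fϑ j * fθ i)
  | theta_v (i) : PBRel n (fθ i * fϑ (lo i)) (fθ i * fϑ (hi i))
  | theta_vv (i) : PBRel n (fθ i * fϑ (lo i)) (fθ i * fϑ (lo i) * fϑ (hi i))
  | v_theta (i) : PBRel n (fϑ (lo i) * fθ i) (fϑ (hi i) * fθ i)
  | vv_theta (i) : PBRel n (fϑ (lo i) * fθ i) (fϑ (lo i) * fϑ (hi i) * fθ i)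
  | theta_v_theta (i) : PBRel n (fθ i * fϑ (lo i) * fθ i) (fθ i)
  | v_theta_v (i) : PBRel n (fϑ (lo i) * fθ i * fϑ (lo i)) (fϑ (lo i) * fϑ (hi i))

/-- The monoid `T` given by the presentation above. -/
abbrev PBMonoid (n : ℕ) := PresentedMonoid (PBRel n)

/-- The generator `σ_{i+1}` of `T`. -/
def σP {n : ℕ} (i : Fin (n - 1)) : PBMonoid n := PresentedMonoid.of (PBRel n) (Sum.inl i)

/-- The generator `θ_{i+1}` of `T`. -/
def θP {n : ℕ} (i : Fin (n - 1)) : PBMonoid n :=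
  PresentedMonoid.of (PBRel n) (Sum.inr (Sum.inl i))

/-- The generator `ϑ_{j+1}` of `T`. -/
def ϑP {n : ℕ} (j : Fin n) : PBMonoid n := PresentedMonoid.of (PBRel n) (Sum.inr (Sum.inr j))

/-!
The `σ_i` satisfy the Coxeter relations, so they define a homomorphism `S_n → T`. Conjugating by
permutations extends the relations from neighbouring indices to elements `θ_{ab}`, `ϑ_a` attached
to arbitrary points, and then every element of `T` takes a normal form `Θ_τ · p · ϑ_A · Θ_τ'`:
`τ`, `τ'` are involutions whose 2-cycles are the upper and lower hooks of a diagram, `p` is a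
permutation, and `A` is the set of lower points not joined to an upper point.

For the converse, let a diagram act as the relation on `{0, 1}`-labellings `f` of the upper and `g`
of the lower points saying that the combined labelling is constant on every block. Composing
relations quantifies over the labels of the middle row, so closed components disappear exactly as
they do in the composition of diagrams. The resulting representation of `T` separates normal
forms. Hence `T` is in bijection with the diagrams, and a diagram is a pair of half-diagrams (an
involution `τ` together with a set of `s` points containing its support) and a bijection between
the points outside these sets. There are `n! / (k! 2^k (s - 2k)! (n - s)!)` half-diagrams with `k`
hooks and `s` chosen points.
-/

open Equiv

/-! ### The Coxeter presentation of the symmetric group -/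

section CoxeterWords

variable {N : Type*} [Monoid N] (g : ℕ → N)

/-- The Coxeter relations of type `A_m` for `g 0, …, g (m - 1)`. -/
structure IsCoxeterA (m : ℕ) : Prop where
  mul_self : ∀ i < m, g i * g i = 1
  commute : ∀ i j, i + 1 < j → j < m → Commute (g i) (g j)
  braid : ∀ i, i + 1 < m → g i * g (i + 1) * g i = g (i + 1) * g i * g (i + 1)

/-- The word `g (k - 1) * ⋯ * g j`, empty if `k ≤ j`. For `j ≤ k` these words represent the
cosets of `S_k` in `S_{k+1}`. -/
def descProd : ℕ → ℕ → N
  | 0, _ => 1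
  | k + 1, j => if j ≤ k then g k * descProd k j else 1

/-- The submonoid generated by `g 0, …, g (k - 1)`. -/
def initialClosure (k : ℕ) : Submonoid N := Submonoid.closure (g '' Set.Iio k)

variable {g} {m : ℕ}

lemma descProd_self (k : ℕ) : descProd g k k = 1 := by
  cases k <;> simp [descProd]

lemma descProd_succ {j k : ℕ} (h : j ≤ k) : descProd g (k + 1) j = g k * descProd g k j :=
  if_pos h

lemma commute_descProd {x : N} {j k : ℕ} (h : ∀ l, j ≤ l → l < k → Commute (g l) x) :
    Commute (descProd g k j) x := by
  induction k with
  | zero => exact Commute.one_left x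
  | succ k ih =>
    rw [descProd]
    split_ifs with hjk
    · exact (h k hjk k.lt_succ_self).mul_left (ih fun l hjl hlk => h l hjl (by omega))
    · exact Commute.one_left x

lemma descProd_succ_mul {i k : ℕ} (h : i < k) : descProd g k (i + 1) * g i = descProd g k i := by
  induction k, h using Nat.le_induction with
  | base => rw [descProd_self, descProd_succ le_rfl, descProd_self, one_mul, mul_one]
  | succ k hik ih => rw [descProd_succ hik, descProd_succ (by omega), mul_assoc, ih]

lemma IsCoxeterA.descProd_mul_shift (H : IsCoxeterA g m) {j k l : ℕ} (hjl : j ≤ l)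
    (hlk : l + 1 < k) (hkm : k ≤ m) : descProd g k j * g (l + 1) = g l * descProd g k j := by
  induction k, hlk using Nat.le_induction with
  | base =>
    have hcomm : descProd g l j * g (l + 1) = g (l + 1) * descProd g l j :=
      commute_descProd fun i _ hil => H.commute i (l + 1) (by omega) (by omega)
    calc descProd g (l + 2) j * g (l + 1)
        = g (l + 1) * g l * (descProd g l j * g (l + 1)) := by
          rw [descProd_succ (by omega), descProd_succ hjl]; simp only [mul_assoc]
      _ = g (l + 1) * g l * g (l + 1) * descProd g l j := by rw [hcomm, ← mul_assoc]
      _ = g l * descProd g (l + 2) j := by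
          rw [← H.braid l (by omega), descProd_succ (by omega), descProd_succ hjl]
          simp only [mul_assoc]
  | succ k hlk ih =>
    rw [descProd_succ (by omega), mul_assoc, ih (by omega), ← mul_assoc, ← mul_assoc,
      (H.commute l k (by omega) (by omega)).eq]

lemma mem_initialClosure {i k : ℕ} (h : i < k) : g i ∈ initialClosure g k :=
  Submonoid.subset_closure ⟨i, h, rfl⟩

lemma IsCoxeterA.exists_eq_mul_descProd (H : IsCoxeterA g m) {k : ℕ} (hk : k + 1 ≤ m) {w : N}
    (hw : w ∈ initialClosure g (k + 1)) :
    ∃ u ∈ initialClosure g k, ∃ j ≤ k + 1, w = u * descProd g (k + 1) j := by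
  induction hw using Submonoid.closure_induction_right with
  | one => exact ⟨1, one_mem _, k + 1, le_rfl, by rw [descProd_self, mul_one]⟩
  | mul_right x y hx hy ih =>
    obtain ⟨u, hu, j, hj, rfl⟩ := ih
    obtain ⟨i, hik : i < k + 1, rfl⟩ := hy
    rcases lt_trichotomy i j with hij | rfl | hij
    · rcases Nat.lt_or_eq_of_le (Nat.succ_le_of_lt hij) with hij | rfl
      · have hcomm : Commute (descProd g (k + 1) j) (g i) :=
          commute_descProd fun l _ _ => (H.commute i l (by omega) (by omega)).symm
        exact ⟨u * g i, mul_mem hu (mem_initialClosure (by omega)), j, hj, by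
          rw [mul_assoc, hcomm.eq, mul_assoc]⟩
      · exact ⟨u, hu, i, by omega, by rw [mul_assoc, descProd_succ_mul hik]⟩
    · exact ⟨u, hu, i + 1, by omega, by
        rw [mul_assoc, ← descProd_succ_mul hik, mul_assoc, H.mul_self i (by omega), mul_one]⟩
    · obtain ⟨l, rfl⟩ : ∃ l, i = l + 1 := ⟨i - 1, by omega⟩
      exact ⟨u * g l, mul_mem hu (mem_initialClosure (by omega)), j, hj, by
        rw [mul_assoc, H.descProd_mul_shift (by omega) hik hk, mul_assoc]⟩

lemma IsCoxeterA.prodMk {M : Type*} [Monoid M] {f : ℕ → M} (hf : IsCoxeterA f m)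
    (hg : IsCoxeterA g m) : IsCoxeterA (fun i => (f i, g i)) m where
  mul_self i hi := Prod.ext (hf.mul_self i hi) (hg.mul_self i hi)
  commute i j hij hj := Prod.ext (hf.commute i j hij hj) (hg.commute i j hij hj)
  braid i hi := Prod.ext (hf.braid i hi) (hg.braid i hi)

end CoxeterWords

section PermPresentation

variable {T : Type*} [Monoid T] {n : ℕ}

/-- The transposition `(i i+1)` of `Fin n`, or `1` if `i + 1` is out of range. -/
def adjSwap (n i : ℕ) : Perm (Fin n) :=
  if h : i < n - 1 then swap (lo ⟨i, h⟩) (hi ⟨i, h⟩) else 1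

lemma adjSwap_of_lt {i : ℕ} (h : i < n - 1) : adjSwap n i = swap (lo ⟨i, h⟩) (hi ⟨i, h⟩) :=
  dif_pos h

lemma lo_ne_hi_of_le {i j : Fin (n - 1)} (h : i ≤ j) : lo i ≠ hi j :=
  Fin.ne_of_lt (Nat.lt_succ_of_le h)

lemma lo_ne_hi (i : Fin (n - 1)) : lo i ≠ hi i := lo_ne_hi_of_le le_rfl

lemma swap_braid {α : Type*} [DecidableEq α] {a b c : α} (hab : a ≠ b) (hac : a ≠ c)
    (hbc : b ≠ c) : swap a b * swap b c * swap a b = swap b c * swap a b * swap b c := by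
  rw [swap_mul_swap_mul_swap hab hac, swap_comm a b, swap_comm b c,
    swap_mul_swap_mul_swap hbc.symm hac.symm, swap_comm]

lemma isCoxeterA_adjSwap (n : ℕ) : IsCoxeterA (adjSwap n) (n - 1) where
  mul_self i hi := by rw [adjSwap_of_lt hi, swap_mul_self]
  commute i j hij hj := by
    rw [adjSwap_of_lt (by omega), adjSwap_of_lt hj]
    refine (Perm.disjoint_swap_swap ?_).commute
    simp only [lo, _root_.hi, List.nodup_cons, List.mem_cons, List.not_mem_nil, Fin.mk.injEq]
    grind
  braid i hi := by
    have h : i < n - 1 := by omega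
    have hne : lo ⟨i, h⟩ ≠ _root_.hi ⟨i + 1, hi⟩ :=
      lo_ne_hi_of_le (Nat.le_succ i)
    have hlo : lo ⟨i + 1, hi⟩ = _root_.hi ⟨i, h⟩ := rfl
    rw [adjSwap_of_lt h, adjSwap_of_lt hi, hlo]
    exact swap_braid (lo_ne_hi _) hne (hlo ▸ lo_ne_hi ⟨i + 1, hi⟩)

/-- The submonoid of `S_n × T` generated by the pairs `((i i+1), g i)` with `i < k`. For `k = n - 1`
it turns out to be the graph of the homomorphism `S_n → T` extending `g`. -/
def coxeterGraph (n : ℕ) (g : ℕ → T) (k : ℕ) : Submonoid (Perm (Fin n) × T) :=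
  initialClosure (fun i => (adjSwap n i, g i)) k

variable {g : ℕ → T}

lemma fst_apply_of_mem_coxeterGraph {k : ℕ} {w : Perm (Fin n) × T} (hw : w ∈ coxeterGraph n g k)
    {x : Fin n} (hx : k < x) : w.1 x = x := by
  induction hw using Submonoid.closure_induction with
  | one => rfl
  | mul a b _ _ ha hb => rw [Prod.fst_mul, Perm.mul_apply, hb, ha]
  | mem a ha =>
    obtain ⟨i, hi : i < k, rfl⟩ := ha
    simp only [adjSwap]
    split_ifs
    · apply swap_apply_of_ne_of_ne <;> simp only [lo, _root_.hi, ne_eq, Fin.ext_iff] <;> omega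
    · rfl

lemma fst_descProd_apply {j k : ℕ} (hjk : j ≤ k) (hk : k < n) :
    (descProd (fun i => (adjSwap n i, g i)) k j).1 ⟨j, by omega⟩ = ⟨k, hk⟩ := by
  induction k, hjk using Nat.le_induction with
  | base => rw [descProd_self]; rfl
  | succ k hjk ih =>
    rw [descProd_succ hjk, Prod.fst_mul, Perm.mul_apply, ih (by omega)]
    simp only [adjSwap_of_lt (show k < n - 1 by omega)]
    exact swap_apply_left (lo ⟨k, by omega⟩) _

lemma IsCoxeterA.eq_one_of_mem_coxeterGraph (H : IsCoxeterA g (n - 1)) {k : ℕ} (hk : k ≤ n - 1)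
    {w : Perm (Fin n) × T} (hw : w ∈ coxeterGraph n g k) (hw1 : w.1 = 1) : w = 1 := by
  induction k generalizing w with
  | zero => simpa [coxeterGraph, initialClosure] using hw
  | succ k ih =>
    obtain ⟨u, hu, j, hj, rfl⟩ := ((isCoxeterA_adjSwap n).prodMk H).exists_eq_mul_descProd hk hw
    have hjk : (u * descProd (fun i => (adjSwap n i, g i)) (k + 1) j).1 ⟨j, by omega⟩ =
        ⟨k + 1, by omega⟩ := by
      rw [Prod.fst_mul, Perm.mul_apply, fst_descProd_apply hj (by omega),
        fst_apply_of_mem_coxeterGraph hu k.lt_succ_self]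
    obtain rfl : j = k + 1 := by simpa [hw1] using hjk
    rw [descProd_self, mul_one] at hw1 ⊢
    exact ih (by omega) hu hw1

@[elab_as_elim]
theorem adjSwap_induction {P : Perm (Fin n) → Prop} (p : Perm (Fin n)) (one : P 1)
    (mul : ∀ p q, P p → P q → P (p * q)) (swap_lo_hi : ∀ i, P (swap (lo i) (hi i))) : P p := by
  rcases n with _ | n
  · rwa [Subsingleton.elim p 1]
  have hp : p ∈ Submonoid.closure (Set.range fun i : Fin n => swap i.castSucc i.succ) := by
    rw [Perm.mclosure_swap_castSucc_succ]; trivial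
  induction hp using Submonoid.closure_induction with
  | one => exact one
  | mul p q _ _ hp hq => exact mul p q hp hq
  | mem p hp =>
    obtain ⟨i, rfl⟩ := hp
    exact swap_lo_hi i

lemma mk_mem_coxeterGraph (g : ℕ → T) (i : Fin (n - 1)) :
    (swap (lo i) (hi i), g i) ∈ coxeterGraph n g (n - 1) := by
  rw [← adjSwap_of_lt i.2]
  exact mem_initialClosure i.2

lemma exists_mem_coxeterGraph (g : ℕ → T) (p : Perm (Fin n)) :
    ∃ t, (p, t) ∈ coxeterGraph n g (n - 1) := by
  induction p using adjSwap_induction with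
  | one => exact ⟨1, one_mem _⟩
  | mul p q hp hq =>
    obtain ⟨t, ht⟩ := hp
    obtain ⟨u, hu⟩ := hq
    exact ⟨t * u, mul_mem ht hu⟩
  | swap_lo_hi i => exact ⟨g i, mk_mem_coxeterGraph g i⟩

lemma IsCoxeterA.fst_injOn_coxeterGraph (H : IsCoxeterA g (n - 1)) :
    Set.InjOn Prod.fst (coxeterGraph n g (n - 1) : Set (Perm (Fin n) × T)) := by
  rintro ⟨p, t⟩ ht ⟨_, u⟩ hu rfl
  obtain ⟨v, hv⟩ := exists_mem_coxeterGraph g p⁻¹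
  have htv : t * v = 1 := congrArg Prod.snd <|
    H.eq_one_of_mem_coxeterGraph le_rfl (mul_mem ht hv) (mul_inv_cancel p)
  have hvu : v * u = 1 := congrArg Prod.snd <|
    H.eq_one_of_mem_coxeterGraph le_rfl (mul_mem hv hu) (inv_mul_cancel p)
  rw [left_inv_eq_right_inv htv hvu]

theorem IsCoxeterA.exists_permHom (H : IsCoxeterA g (n - 1)) :
    ∃ f : Perm (Fin n) →* T, ∀ i : Fin (n - 1), f (swap (lo i) (hi i)) = g i := by
  have hbij : Function.Bijective (Prod.fst ∘ (coxeterGraph n g (n - 1)).subtype) :=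
    ⟨Set.injOn_iff_injective.1 H.fst_injOn_coxeterGraph, fun p =>
      let ⟨t, ht⟩ := exists_mem_coxeterGraph g p; ⟨⟨(p, t), ht⟩, rfl⟩⟩
  obtain ⟨f, hf⟩ := Submonoid.exists_eq_mgraph hbij
  exact ⟨f, fun i => MonoidHom.mem_mgraph.1 (hf ▸ mk_mem_coxeterGraph g i)⟩

end PermPresentation

lemma mem_subgroup_of_swap_mem {α : Type*} [DecidableEq α] [Fintype α] (M : Subgroup (Perm α))
    {A : Finset α} (hA : ∀ x ∈ A, ∀ y ∈ A, swap x y ∈ M) {p : Perm α} (hp : p.support ⊆ A) :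
    p ∈ M := by
  obtain ⟨q, rfl⟩ := Perm.mem_range_ofSubtype_iff (p := (· ∈ A)).2 hp
  clear hp
  induction q using Perm.swap_induction_on with
  | one => rw [map_one]; exact one_mem M
  | swap_mul q x y _ ih =>
    rw [map_mul, Perm.ofSubtype_swap_eq]
    exact mul_mem (hA x x.2 y y.2) ih

lemma exists_perm_apply_eq_apply_eq {α : Type*} {a b c d : α} (hab : a ≠ b) (hcd : c ≠ d) :
    ∃ p : Perm α, p a = c ∧ p b = d :=
  MulAction.is_two_pretransitive_iff.1 (Perm.isMultiplyPretransitive α 2) hab hcd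

lemma exists_perm_map_eq {α : Type*} {l l' : List α} (hl : l.Nodup) (hl' : l'.Nodup)
    (h : l.length = l'.length) : ∃ p : Perm α, l.map p = l' := by
  have := Perm.isMultiplyPretransitive α l.length
  obtain ⟨p, hp⟩ := MulAction.exists_smul_eq (Perm α)
    (⟨l.get, List.nodup_iff_injective_get.1 hl⟩ : Fin l.length ↪ α)
    ⟨l'.get ∘ Fin.cast h, (List.nodup_iff_injective_get.1 hl').comp (Fin.cast_injective h)⟩
  refine ⟨p, List.ext_get (by simpa using h) fun k hk hk' => ?_⟩
  simpa using DFunLike.congr_fun hp ⟨k, by simpa using hk⟩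

lemma apply_apply_of_mul_self_eq_one {α : Type*} {τ : Perm α} (hτ : τ * τ = 1) (a : α) :
    τ (τ a) = a := by
  rw [← Perm.mul_apply, hτ, Perm.one_apply]

lemma mul_swap_mul_self {α : Type*} [DecidableEq α] {τ : Perm α} (hτ : τ * τ = 1) {a b : α}
    (h : swap (τ a) (τ b) = swap a b) : τ * swap a b * (τ * swap a b) = 1 := by
  nth_rw 1 [mul_swap_eq_swap_mul]
  rw [h, mul_assoc, ← mul_assoc τ, hτ, one_mul, swap_mul_self]

lemma mul_swap_apply_mul_self {α : Type*} [DecidableEq α] {τ : Perm α} (hτ : τ * τ = 1) (a : α) :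
    τ * swap a (τ a) * (τ * swap a (τ a)) = 1 :=
  mul_swap_mul_self hτ (by rw [apply_apply_of_mul_self_eq_one hτ, swap_comm])

namespace PBMonoid

variable {n : ℕ}

lemma mk_eq_mk {a b : FreeMonoid (PBGen n)} (h : PBRel n a b) :
    PresentedMonoid.mk (PBRel n) a = PresentedMonoid.mk (PBRel n) b :=
  PresentedMonoid.mk_eq_mk_of_rel h

/-! ### The action of the symmetric group on `T` by conjugation -/

lemma isCoxeterA_σP (n : ℕ) :
    IsCoxeterA (fun i => if h : i < n - 1 then (σP ⟨i, h⟩ : PBMonoid n) else 1) (n - 1) where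
  mul_self i hi := by
    simp only [dif_pos hi]
    exact mk_eq_mk (.sigma_sq _)
  commute i j hij hj := by
    simp only [dif_pos hj, dif_pos (show i < n - 1 by omega)]
    exact mk_eq_mk (.sigma_comm _ _ (by simp only [Nat.dist]; omega))
  braid i hi := by
    simp only [dif_pos hi, dif_pos (show i < n - 1 by omega)]
    exact mk_eq_mk (.braid _ _ (by simp [Nat.dist]))

/-- The homomorphism `S_n → T` with `(i i+1) ↦ σ_i`. -/
noncomputable def permHom : Perm (Fin n) →* PBMonoid n := (isCoxeterA_σP n).exists_permHom.choose

lemma permHom_swap_lo_hi (i : Fin (n - 1)) : permHom (swap (lo i) (hi i)) = σP i :=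
  ((isCoxeterA_σP n).exists_permHom.choose_spec i).trans (dif_pos i.2)

lemma permHom_mul_permHom_inv (p : Perm (Fin n)) : permHom p * permHom p⁻¹ = 1 := by
  rw [← map_mul, mul_inv_cancel, map_one]

lemma permHom_inv_mul_permHom (p : Perm (Fin n)) : permHom p⁻¹ * permHom p = 1 := by
  rw [← map_mul, inv_mul_cancel, map_one]

lemma σP_mul_self (i : Fin (n - 1)) : (σP i : PBMonoid n) * σP i = 1 := mk_eq_mk (.sigma_sq i)

/-- The action of `S_n` on `T` by conjugation with `permHom`. -/
noncomputable def conj : Perm (Fin n) →* MulAut (PBMonoid n) :=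
  (MulDistribMulAction.toMulAut (ConjAct (PBMonoid n)ˣ) (PBMonoid n)).comp
    (ConjAct.toConjAct.toMonoidHom.comp permHom.toHomUnits)

lemma conj_apply (p : Perm (Fin n)) (x : PBMonoid n) :
    conj p x = permHom p * x * permHom p⁻¹ := rfl

lemma conj_mul_apply (p q : Perm (Fin n)) (x : PBMonoid n) :
    conj (p * q) x = conj p (conj q x) := by
  rw [map_mul]; rfl

lemma permHom_mul (p : Perm (Fin n)) (x : PBMonoid n) : permHom p * x = conj p x * permHom p := by
  rw [conj_apply, mul_assoc _ _ (permHom p), permHom_inv_mul_permHom, mul_one]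

lemma mul_permHom (x : PBMonoid n) (p : Perm (Fin n)) :
    x * permHom p = permHom p * conj p⁻¹ x := by
  rw [permHom_mul, ← conj_mul_apply, mul_inv_cancel, map_one, MulAut.one_apply]

lemma conj_eq_iff {p : Perm (Fin n)} {x y : PBMonoid n} :
    conj p x = y ↔ permHom p * x = y * permHom p := by
  rw [permHom_mul]
  refine ⟨fun h => by rw [h], fun h => ?_⟩
  simpa only [mul_assoc, permHom_mul_permHom_inv, mul_one] using congrArg (· * permHom p⁻¹) h

lemma conj_permHom_swap (p : Perm (Fin n)) (a b : Fin n) :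
    conj p (permHom (swap a b)) = permHom (swap (p a) (p b)) := by
  rw [conj_apply, ← map_mul, ← map_mul, swap_apply_apply]

lemma conj_ϑP (p : Perm (Fin n)) (a : Fin n) : conj p (ϑP a) = ϑP (p a) := by
  induction p using adjSwap_induction generalizing a with
  | one => rw [map_one]; rfl
  | mul p q hp hq => rw [conj_mul_apply, hq, hp, Perm.mul_apply]
  | swap_lo_hi i =>
    have hlo : (σP i : PBMonoid n) * ϑP (lo i) = ϑP (hi i) * σP i := mk_eq_mk (.sigma_v i)
    rw [conj_eq_iff, permHom_swap_lo_hi]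
    rcases eq_or_ne a (lo i) with rfl | hne_lo
    · rw [swap_apply_left, hlo]
    rcases eq_or_ne a (hi i) with rfl | hne_hi
    · rw [swap_apply_right]
      calc (σP i : PBMonoid n) * ϑP (hi i) = σP i * (ϑP (hi i) * σP i) * σP i := by
            rw [mul_assoc, mul_assoc, σP_mul_self, mul_one]
        _ = ϑP (lo i) * σP i := by rw [← hlo, ← mul_assoc, σP_mul_self, one_mul]
    · rw [swap_apply_of_ne_of_ne hne_lo hne_hi]
      exact mk_eq_mk (.sigma_v_comm i a hne_lo hne_hi)

lemma conj_swap_θP_zero (h : 0 < n - 1) {x y : Fin n} (hx : 2 ≤ x.1) (hxy : x ≤ y) :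
    conj (swap x y) (θP ⟨0, h⟩) = θP ⟨0, h⟩ := by
  suffices ∀ k (hk : k < n), x.1 ≤ k →
      swap x ⟨k, hk⟩ ∈ (MulAction.stabilizer (MulAut (PBMonoid n)) (θP ⟨0, h⟩)).comap conj from
    this y y.2 hxy
  intro k hk hxk
  induction k, hxk using Nat.le_induction with
  | base => rw [Fin.eta, swap_self]; exact one_mem _
  | succ k hxk ih =>
    refine SubmonoidClass.swap_mem_trans _ (ih (by omega)) (conj_eq_iff.2 ?_)
    have hadj : (swap ⟨k, by omega⟩ ⟨k + 1, hk⟩ : Perm (Fin n)) =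
        swap (lo ⟨k, by omega⟩) (hi ⟨k, by omega⟩) := rfl
    rw [hadj, permHom_swap_lo_hi]
    exact (mk_eq_mk (.theta_sigma_comm ⟨0, h⟩ ⟨k, _⟩ (by simp only [Nat.dist]; omega))).symm

lemma conj_θP_zero (h : 0 < n - 1) {p : Perm (Fin n)} (hlo : p (lo ⟨0, h⟩) = lo ⟨0, h⟩)
    (hhi : p (hi ⟨0, h⟩) = hi ⟨0, h⟩) : conj p (θP ⟨0, h⟩) = θP ⟨0, h⟩ := by
  refine mem_subgroup_of_swap_mem
    ((MulAction.stabilizer (MulAut (PBMonoid n)) (θP ⟨0, h⟩)).comap conj)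
    (A := {x | 2 ≤ x.1}) (fun x hx y hy => ?_) fun x hx => ?_
  · simp only [Finset.mem_filter_univ] at hx hy
    rcases le_total x y with hxy | hxy
    · exact conj_swap_θP_zero h hx hxy
    · rw [swap_comm]
      exact conj_swap_θP_zero h hy hxy
  · rw [Perm.mem_support] at hx
    have hx_lo : x ≠ lo ⟨0, h⟩ := by rintro rfl; exact hx hlo
    have hx_hi : x ≠ hi ⟨0, h⟩ := by rintro rfl; exact hx hhi
    simp only [lo, hi, ne_eq, Fin.ext_iff] at hx_lo hx_hi
    simp only [Finset.mem_filter_univ]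
    omega

lemma conj_θP_of_dist_eq_one {i j : Fin (n - 1)} (h : Nat.dist i.1 j.1 = 1) :
    conj (swap (lo i) (hi i) * swap (lo j) (hi j)) (θP i) = θP j := by
  have hσθ : (σP i : PBMonoid n) * θP j * θP i = σP j * θP i := mk_eq_mk (.sigma_theta_theta i j h)
  have hθσ : (θP j : PBMonoid n) * θP i * σP j = θP j * σP i :=
    mk_eq_mk (.theta_theta_sigma j i (by rwa [Nat.dist_comm]))
  rw [conj_eq_iff, map_mul, permHom_swap_lo_hi, permHom_swap_lo_hi]
  calc (σP i * σP j * θP i : PBMonoid n) = θP j * θP i := by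
        rw [mul_assoc, ← hσθ, ← mul_assoc, ← mul_assoc, σP_mul_self, one_mul]
    _ = θP j * (σP i * σP j) := by rw [← mul_assoc, ← hθσ, mul_assoc, σP_mul_self, mul_one]

lemma exists_conj_θP_zero (h : 0 < n - 1) (i : Fin (n - 1)) :
    ∃ p : Perm (Fin n), p (lo ⟨0, h⟩) = lo i ∧ p (hi ⟨0, h⟩) = hi i ∧
      conj p (θP ⟨0, h⟩) = θP i := by
  obtain ⟨k, hk⟩ := i
  induction k with
  | zero => exact ⟨1, rfl, rfl, by rw [map_one]; rfl⟩
  | succ k ih =>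
    obtain ⟨p, hlo, hhi, hconj⟩ := ih (by omega)
    have hmid : lo (⟨k + 1, hk⟩ : Fin (n - 1)) = hi ⟨k, by omega⟩ := rfl
    have hne : lo (⟨k, by omega⟩ : Fin (n - 1)) ≠ hi ⟨k + 1, hk⟩ :=
      lo_ne_hi_of_le (Nat.le_succ k)
    refine ⟨swap (lo ⟨k, by omega⟩) (hi ⟨k, by omega⟩) * swap (lo ⟨k + 1, hk⟩) (hi ⟨k + 1, hk⟩) * p,
      ?_, ?_, ?_⟩
    · rw [Perm.mul_apply, Perm.mul_apply, hlo, swap_apply_of_ne_of_ne (by simp [lo]) hne,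
        swap_apply_left, hmid]
    · rw [Perm.mul_apply, Perm.mul_apply, hhi, ← hmid, swap_apply_left,
        swap_apply_of_ne_of_ne hne.symm (lo_ne_hi _).symm]
    · rw [conj_mul_apply, hconj, conj_θP_of_dist_eq_one (by simp [Nat.dist])]

lemma conj_θP {i j : Fin (n - 1)} {p : Perm (Fin n)} (hlo : p (lo i) = lo j)
    (hhi : p (hi i) = hi j) : conj p (θP i) = θP j := by
  have h : 0 < n - 1 := i.pos
  obtain ⟨q, hqlo, hqhi, hq⟩ := exists_conj_θP_zero h i
  obtain ⟨r, hrlo, hrhi, hr⟩ := exists_conj_θP_zero h j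
  have hstab : conj (r⁻¹ * (p * q)) (θP ⟨0, h⟩) = θP ⟨0, h⟩ := by
    apply conj_θP_zero <;>
      simp only [Perm.mul_apply, Perm.inv_eq_iff_eq, hqlo, hqhi, hrlo, hrhi, hlo, hhi]
  rw [← hq, ← hr, ← conj_mul_apply]
  nth_rw 2 [← hstab]
  rw [← conj_mul_apply, mul_inv_cancel_left]

open Classical in
/-- The element `θ_{ab}` attached to arbitrary points `a ≠ b`, a conjugate of the generators `θ_i`;
by convention `θ_{aa} = 1`. -/
noncomputable def theta (a b : Fin n) : PBMonoid n :=
  if h : ∃ q : Perm (Fin n) × Fin (n - 1), q.1 (lo q.2) = a ∧ q.1 (hi q.2) = b then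
    conj h.choose.1 (θP h.choose.2) else 1

lemma theta_apply_lo_hi (p : Perm (Fin n)) (i : Fin (n - 1)) :
    theta (p (lo i)) (p (hi i)) = conj p (θP i) := by
  have h : ∃ q : Perm (Fin n) × Fin (n - 1), q.1 (lo q.2) = p (lo i) ∧ q.1 (hi q.2) = p (hi i) :=
    ⟨(p, i), rfl, rfl⟩
  obtain ⟨hlo, hhi⟩ := h.choose_spec
  rw [theta, dif_pos h, ← mul_inv_cancel_left p h.choose.1, conj_mul_apply]
  congr 1
  apply conj_θP
  · rw [Perm.mul_apply, Perm.inv_eq_iff_eq, hlo]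
  · rw [Perm.mul_apply, Perm.inv_eq_iff_eq, hhi]

lemma theta_lo_hi (i : Fin (n - 1)) : theta (lo i) (hi i) = θP i := by
  simpa using theta_apply_lo_hi 1 i

lemma theta_self (a : Fin n) : theta a a = 1 := by
  rw [theta, dif_neg]
  rintro ⟨q, hlo, hhi⟩
  exact lo_ne_hi q.2 (q.1.injective (hlo.trans hhi.symm))

lemma exists_perm_lo_hi {a b : Fin n} (h : a ≠ b) :
    ∃ (p : Perm (Fin n)) (i : Fin (n - 1)), p (lo i) = a ∧ p (hi i) = b := by
  have hn : 0 < n - 1 := by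
    have := Fin.val_ne_of_ne h
    omega
  obtain ⟨p, hlo, hhi⟩ := exists_perm_apply_eq_apply_eq (lo_ne_hi ⟨0, hn⟩) h
  exact ⟨p, _, hlo, hhi⟩

lemma conj_theta (p : Perm (Fin n)) (a b : Fin n) : conj p (theta a b) = theta (p a) (p b) := by
  rcases eq_or_ne a b with rfl | h
  · rw [theta_self, theta_self, map_one]
  obtain ⟨q, i, rfl, rfl⟩ := exists_perm_lo_hi h
  rw [theta_apply_lo_hi, ← conj_mul_apply, ← theta_apply_lo_hi, Perm.mul_apply, Perm.mul_apply]

/-! ### The relations between elements attached to arbitrary points -/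

lemma theta_mul_self (a b : Fin n) : theta a b * theta a b = theta a b := by
  rcases eq_or_ne a b with rfl | h
  · rw [theta_self, mul_one]
  obtain ⟨p, i, rfl, rfl⟩ := exists_perm_lo_hi h
  rw [← conj_theta, ← map_mul, theta_lo_hi]
  exact congrArg (conj p) (mk_eq_mk (.theta_idem i))

lemma permHom_swap_mul_theta (a b : Fin n) : permHom (swap a b) * theta a b = theta a b := by
  rcases eq_or_ne a b with rfl | h
  · rw [swap_self, theta_self, mul_one]
    exact map_one permHom
  obtain ⟨p, i, rfl, rfl⟩ := exists_perm_lo_hi h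
  rw [← conj_theta, ← conj_permHom_swap, ← map_mul, theta_lo_hi, permHom_swap_lo_hi]
  exact congrArg (conj p) (mk_eq_mk (.sigma_theta i))

lemma theta_mul_permHom_swap (a b : Fin n) : theta a b * permHom (swap a b) = theta a b := by
  rcases eq_or_ne a b with rfl | h
  · rw [swap_self, theta_self, one_mul]
    exact map_one permHom
  obtain ⟨p, i, rfl, rfl⟩ := exists_perm_lo_hi h
  rw [← conj_theta, ← conj_permHom_swap, ← map_mul, theta_lo_hi, permHom_swap_lo_hi]
  exact congrArg (conj p) (mk_eq_mk (.theta_sigma i))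

lemma theta_symm (a b : Fin n) : theta a b = theta b a := by
  have hconj := permHom_mul (swap a b) (theta a b)
  rwa [conj_theta, swap_apply_left, swap_apply_right, permHom_swap_mul_theta, swap_comm,
    theta_mul_permHom_swap] at hconj

lemma ϑP_mul_self (a : Fin n) : (ϑP a : PBMonoid n) * ϑP a = ϑP a := mk_eq_mk (.v_idem a)

lemma commute_ϑP (a b : Fin n) : Commute (ϑP a : PBMonoid n) (ϑP b) := by
  rcases eq_or_ne a b with rfl | h
  · exact Commute.refl _
  · exact mk_eq_mk (.v_comm a b h)

lemma commute_ϑP_theta {a b c : Fin n} (hca : c ≠ a) (hcb : c ≠ b) :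
    Commute (ϑP c) (theta a b) := by
  rcases eq_or_ne a b with rfl | h
  · rw [theta_self]
    exact Commute.one_right _
  obtain ⟨p, i, rfl, rfl⟩ := exists_perm_lo_hi h
  obtain ⟨c, rfl⟩ := p.surjective c
  have hcomm : Commute (ϑP c) (θP i) :=
    (mk_eq_mk (.theta_v_comm i c (fun e => hca (by rw [e])) (fun e => hcb (by rw [e])))).symm
  rw [← conj_theta, ← conj_ϑP, theta_lo_hi]
  exact hcomm.map (conj p)

lemma theta_mul_ϑP_mul_ϑP_mul_theta {a b : Fin n} (h : a ≠ b) :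
    theta a b * ϑP a * ϑP b * theta a b = theta a b := by
  obtain ⟨p, i, rfl, rfl⟩ := exists_perm_lo_hi h
  have hϑϑ : (θP i : PBMonoid n) * ϑP (lo i) = θP i * ϑP (lo i) * ϑP (hi i) :=
    mk_eq_mk (.theta_vv i)
  simp only [← conj_theta, ← conj_ϑP, ← map_mul, theta_lo_hi]
  rw [← hϑϑ]
  exact congrArg (conj p) (mk_eq_mk (.theta_v_theta i))

lemma ϑP_mul_ϑP_mul_theta {a b : Fin n} (h : a ≠ b) :
    ϑP a * ϑP b * theta a b = ϑP b * theta a b := by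
  obtain ⟨p, i, rfl, rfl⟩ := exists_perm_lo_hi h
  have hϑϑ : (ϑP (lo i) : PBMonoid n) * θP i = ϑP (lo i) * ϑP (hi i) * θP i :=
    mk_eq_mk (.vv_theta i)
  simp only [← conj_theta, ← conj_ϑP, ← map_mul, theta_lo_hi]
  rw [← hϑϑ]
  exact congrArg (conj p) (mk_eq_mk (.v_theta i))

lemma ϑP_mul_theta_mul_ϑP {a b : Fin n} (h : a ≠ b) :
    ϑP a * theta a b * ϑP a = ϑP a * ϑP b := by
  obtain ⟨p, i, rfl, rfl⟩ := exists_perm_lo_hi h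
  simp only [← conj_theta, ← conj_ϑP, ← map_mul, theta_lo_hi]
  exact congrArg (conj p) (mk_eq_mk (.v_theta_v i))

lemma permHom_swap_mul_ϑP_mul_ϑP {a b : Fin n} (h : a ≠ b) :
    permHom (swap a b) * (ϑP a * ϑP b) = ϑP a * ϑP b := by
  obtain ⟨p, i, rfl, rfl⟩ := exists_perm_lo_hi h
  have hϑσϑ : (ϑP (lo i) : PBMonoid n) * σP i * ϑP (lo i) = ϑP (lo i) * ϑP (hi i) :=
    mk_eq_mk (.v_sigma_v i)
  have hσϑ : (σP i : PBMonoid n) * ϑP (hi i) = ϑP (lo i) * σP i := by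
    rw [← permHom_swap_lo_hi, permHom_mul, conj_ϑP, swap_apply_right]
  simp only [← conj_permHom_swap, ← conj_ϑP, ← map_mul, permHom_swap_lo_hi]
  rw [(commute_ϑP (lo i) (hi i)).eq, ← mul_assoc, hσϑ, hϑσϑ, (commute_ϑP (lo i) (hi i)).eq]

lemma theta_mul_theta {a b c : Fin n} (hab : a ≠ b) (hac : a ≠ c) (hbc : b ≠ c) :
    theta c b * theta a b = theta c b * permHom (swap a c) := by
  have hnodup : [a, b, c].Nodup := by simp [hab, hac, hbc]
  have hn : 3 ≤ n := by simpa using hnodup.length_le_card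
  let i : Fin (n - 1) := ⟨0, by omega⟩
  let j : Fin (n - 1) := ⟨1, by omega⟩
  have hij : hi i = lo j := rfl
  obtain ⟨p, hp⟩ := exists_perm_map_eq (l := [lo i, hi i, hi j]) (by simp [lo, hi, i, j]) hnodup rfl
  simp only [List.map_cons, List.map_nil, List.cons.injEq, and_true] at hp
  obtain ⟨rfl, rfl, rfl⟩ := hp
  have hswap :
      swap (lo i) (hi j) = swap (lo i) (hi i) * swap (lo j) (hi j) * swap (lo i) (hi i) := by
    rw [← hij, swap_comm (lo i) (hi i), swap_comm (hi i) (hi j),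
      swap_mul_swap_mul_swap (p.injective.ne_iff.1 hbc.symm) (p.injective.ne_iff.1 hac.symm)]
  have hσθ : (σP i : PBMonoid n) * θP i = θP i := mk_eq_mk (.sigma_theta i)
  have hσθθ : (σP i : PBMonoid n) * θP j * θP i = σP j * θP i :=
    mk_eq_mk (.sigma_theta_theta i j (by simp [i, j, Nat.dist]))
  have hθθ : θP j * θP i = permHom (swap (lo i) (hi j)) * θP i := by
    rw [hswap, map_mul, map_mul, permHom_swap_lo_hi, permHom_swap_lo_hi, mul_assoc, hσθ, mul_assoc,
      ← hσθθ, ← mul_assoc, ← mul_assoc, σP_mul_self, one_mul]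
  have hconj := congrArg (conj p) hθθ
  rwa [map_mul, map_mul, conj_permHom_swap, ← theta_apply_lo_hi, ← theta_apply_lo_hi, ← hij,
    permHom_mul, conj_theta, swap_apply_left,
    swap_apply_of_ne_of_ne hab.symm hbc, theta_symm (p (hi i)) (p (hi j))] at hconj

lemma commute_theta {a b c d : Fin n} (hac : a ≠ c) (had : a ≠ d) (hbc : b ≠ c) (hbd : b ≠ d) :
    Commute (theta a b) (theta c d) := by
  rcases eq_or_ne a b with rfl | hab
  · rw [theta_self]
    exact Commute.one_left _
  rcases eq_or_ne c d with rfl | hcd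
  · rw [theta_self]
    exact Commute.one_right _
  have hnodup : [a, b, c, d].Nodup := by simp [hab, hac, had, hbc, hbd, hcd]
  have hn : 4 ≤ n := by simpa using hnodup.length_le_card
  let i : Fin (n - 1) := ⟨0, by omega⟩
  let j : Fin (n - 1) := ⟨2, by omega⟩
  obtain ⟨p, hp⟩ := exists_perm_map_eq (l := [lo i, hi i, lo j, hi j]) (by simp [lo, hi, i, j])
    hnodup rfl
  simp only [List.map_cons, List.map_nil, List.cons.injEq, and_true] at hp
  obtain ⟨rfl, rfl, rfl, rfl⟩ := hp
  have hcomm : Commute (θP i : PBMonoid n) (θP j) :=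
    mk_eq_mk (.theta_comm i j (by simp [i, j, Nat.dist]))
  rw [← conj_theta, ← conj_theta, theta_lo_hi, theta_lo_hi]
  exact hcomm.map (conj p)

/-! ### Normal forms -/

/-- The product of the `ϑ_a` over `a ∈ A`: the diagram that cuts the lines through `A`. -/
noncomputable def cut (A : Finset (Fin n)) : PBMonoid n :=
  A.noncommProd ϑP fun a _ b _ _ => commute_ϑP a b

lemma cut_empty : cut (∅ : Finset (Fin n)) = 1 := Finset.noncommProd_empty _ _

lemma commute_cut {A : Finset (Fin n)} {x : PBMonoid n} (h : ∀ a ∈ A, Commute x (ϑP a)) :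
    Commute x (cut A) :=
  Finset.noncommProd_commute _ _ _ _ h

lemma ϑP_mul_cut {A : Finset (Fin n)} {a : Fin n} (ha : a ∈ A) : ϑP a * cut A = cut A := by
  have hcut : cut A = ϑP a * cut (A.erase a) := (Finset.mul_noncommProd_erase A ha _ _).symm
  rw [hcut, ← mul_assoc, ϑP_mul_self]

lemma cut_mul_ϑP {A : Finset (Fin n)} {a : Fin n} (ha : a ∈ A) : cut A * ϑP a = cut A := by
  rw [← (commute_cut fun b _ => commute_ϑP a b).eq, ϑP_mul_cut ha]

lemma cut_insert (A : Finset (Fin n)) (a : Fin n) : cut (insert a A) = cut A * ϑP a := by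
  by_cases ha : a ∈ A
  · rw [Finset.insert_eq_of_mem ha, cut_mul_ϑP ha]
  · exact Finset.noncommProd_insert_of_notMem' _ _ _ _ ha

lemma conj_cut (p : Perm (Fin n)) (A : Finset (Fin n)) :
    conj p (cut A) = cut (A.map p.toEmbedding) := by
  induction A using Finset.induction_on with
  | empty => rw [Finset.map_empty, cut_empty, map_one]
  | insert a A _ ih =>
    rw [Finset.map_insert, cut_insert, cut_insert, map_mul, ih, conj_ϑP, toEmbedding_apply]

lemma permHom_mul_cut_of_support_subset {A : Finset (Fin n)} {p : Perm (Fin n)}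
    (hp : p.support ⊆ A) : permHom p * cut A = cut A := by
  refine mem_subgroup_of_swap_mem
    ((MulAction.stabilizer (PBMonoid n)ˣ (cut A)).comap permHom.toHomUnits) (fun x hx y hy => ?_) hp
  rcases eq_or_ne x y with rfl | hxy
  · rw [swap_self]
    exact one_mem _
  have hcut : cut A = ϑP x * ϑP y * cut A := by rw [mul_assoc, ϑP_mul_cut hy, ϑP_mul_cut hx]
  change permHom (swap x y) * cut A = cut A
  rw [hcut, ← mul_assoc, permHom_swap_mul_ϑP_mul_ϑP hxy]

lemma permHom_mul_cut_congr {A : Finset (Fin n)} {p q : Perm (Fin n)} (h : ∀ x ∉ A, p x = q x) :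
    permHom p * cut A = permHom q * cut A := by
  have hsupp : (q⁻¹ * p).support ⊆ A := fun x hx => by
    by_contra hxA
    exact Perm.mem_support.1 hx (Perm.inv_eq_iff_eq.2 (h x hxA))
  nth_rw 2 [← permHom_mul_cut_of_support_subset hsupp]
  rw [← mul_assoc, ← map_mul, mul_inv_cancel_left]

/-- The product of the `θ_{a, τ a}`, meant for involutions `τ`: the diagram with an upper and a
lower hook for each transposition of `τ`. Each transposition contributes twice, which is harmless
since the `θ_{ab}` are idempotent. -/
noncomputable def hooks (τ : Perm (Fin n)) : PBMonoid n :=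
  ((List.finRange n).map fun a => theta a (τ a)).prod

lemma hooks_one : hooks (1 : Perm (Fin n)) = 1 :=
  List.prod_eq_one fun x hx => by
    obtain ⟨a, _, rfl⟩ := List.mem_map.1 hx
    exact theta_self a

lemma commute_hooks {τ : Perm (Fin n)} {x : PBMonoid n} (h : ∀ a, Commute x (theta a (τ a))) :
    Commute x (hooks τ) :=
  Commute.list_prod_right _ _ fun y hy => by
    obtain ⟨a, _, rfl⟩ := List.mem_map.1 hy
    exact h a

lemma commute_ϑP_hooks {τ : Perm (Fin n)} {a : Fin n} (ha : τ a = a) :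
    Commute (ϑP a) (hooks τ) := by
  refine commute_hooks fun c => ?_
  rcases eq_or_ne a c with rfl | hac
  · rw [ha, theta_self]
    exact Commute.one_right _
  · exact commute_ϑP_theta hac (ha ▸ τ.injective.ne hac)

lemma commute_theta_hooks {τ : Perm (Fin n)} {a b : Fin n} (ha : τ a = a) (hb : τ b = b) :
    Commute (theta a b) (hooks τ) := by
  refine commute_hooks fun c => ?_
  rcases eq_or_ne a c with rfl | hac
  · rw [ha, theta_self]
    exact Commute.one_right _
  rcases eq_or_ne b c with rfl | hbc
  · rw [hb, theta_self]
    exact Commute.one_right _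
  · exact commute_theta hac (ha ▸ τ.injective.ne hac) hbc (hb ▸ τ.injective.ne hbc)

lemma commute_theta_apply {τ : Perm (Fin n)} (hτ : τ * τ = 1) (a b : Fin n) :
    Commute (theta a (τ a)) (theta b (τ b)) := by
  rcases eq_or_ne a b with rfl | hab
  · exact Commute.refl _
  rcases eq_or_ne a (τ b) with rfl | hne
  · rw [apply_apply_of_mul_self_eq_one hτ, theta_symm]
  · have hne' : τ a ≠ b := fun h => hne (by rw [← h, apply_apply_of_mul_self_eq_one hτ])
    exact commute_theta hab hne hne' (τ.injective.ne hab)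

lemma hooks_eq_prod_map {τ : Perm (Fin n)} (hτ : τ * τ = 1) {l : List (Fin n)}
    (hl : l.Perm (List.finRange n)) : hooks τ = (l.map fun a => theta a (τ a)).prod := by
  refine ((hl.map _).prod_eq' ?_).symm
  rw [List.pairwise_map]
  exact List.pairwise_of_forall fun a b => commute_theta_apply hτ a b

lemma conj_hooks (p : Perm (Fin n)) {τ : Perm (Fin n)} (hτ : τ * τ = 1) :
    conj p (hooks τ) = hooks (p * τ * p⁻¹) := by
  have hconj : p * τ * p⁻¹ * (p * τ * p⁻¹) = 1 := by rw [conj_mul, hτ, mul_one, mul_inv_cancel]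
  have hperm : ((List.finRange n).map p).Perm (List.finRange n) :=
    p.map_finRange_perm
  rw [hooks_eq_prod_map hconj hperm, hooks, map_list_prod, List.map_map, List.map_map]
  congr 2
  funext a
  simp [conj_theta]

lemma hooks_mul_theta_apply {τ : Perm (Fin n)} (hτ : τ * τ = 1) (a : Fin n) :
    hooks τ * theta a (τ a) = hooks τ := by
  have hperm : ((List.finRange n).erase a ++ [a]).Perm (List.finRange n) :=
    (List.perm_append_singleton _ _).trans (List.perm_cons_erase (List.mem_finRange a)).symm
  simp only [hooks_eq_prod_map hτ hperm, List.map_append, List.map_singleton, List.prod_append,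
    List.prod_singleton, mul_assoc, theta_mul_self]

lemma hooks_mul_swap {τ : Perm (Fin n)} (hτ : τ * τ = 1) {a b : Fin n} (hab : a ≠ b)
    (ha : τ a = a) (hb : τ b = b) : hooks (τ * swap a b) = hooks τ * theta a b := by
  have hinvol : τ * swap a b * (τ * swap a b) = 1 := mul_swap_mul_self hτ (by rw [ha, hb])
  let l := (List.finRange n).filter fun x => x ≠ a ∧ x ≠ b
  have hperm : (l ++ [b, a]).Perm (List.finRange n) := by
    refine (List.perm_ext_iff_of_nodup ?_ (List.nodup_finRange n)).2 fun x => ?_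
    · simp +contextual [l, List.nodup_append, (List.nodup_finRange n).filter, hab.symm]
    · simp only [l, List.mem_append, List.mem_filter]
      grind
  have hl : l.map (fun x => theta x ((τ * swap a b) x)) = l.map fun x => theta x (τ x) := by
    refine List.map_congr_left fun x hx => ?_
    obtain ⟨hxa, hxb⟩ : x ≠ a ∧ x ≠ b := by simpa [l] using hx
    rw [Perm.mul_apply, swap_apply_of_ne_of_ne hxa hxb]
  rw [hooks_eq_prod_map hτ hperm, hooks_eq_prod_map hinvol hperm, List.map_append, List.map_append,
    hl]
  simp only [List.map_cons, List.map_nil, List.prod_append, List.prod_cons, List.prod_nil,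
    Perm.mul_apply, swap_apply_left, swap_apply_right, ha, hb, theta_self, mul_one,
    theta_symm b a, theta_mul_self]

lemma hooks_eq_hooks_mul_theta {τ : Perm (Fin n)} (hτ : τ * τ = 1) {a : Fin n} (ha : τ a ≠ a) :
    hooks τ = hooks (τ * swap a (τ a)) * theta a (τ a) := by
  have hττ := apply_apply_of_mul_self_eq_one hτ a
  rw [← hooks_mul_swap (mul_swap_apply_mul_self hτ a) ha.symm (by simp [hττ]) (by simp),
    mul_assoc, swap_mul_self, mul_one]

lemma hooks_mul_theta {τ : Perm (Fin n)} (hτ : τ * τ = 1) {a b : Fin n} (hab : a ≠ b)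
    (hb : τ b ≠ b) : hooks τ * theta a b = hooks τ * permHom (swap a (τ b)) := by
  rcases eq_or_ne a (τ b) with rfl | hne
  · rw [swap_self, theta_symm, hooks_mul_theta_apply hτ]
    exact (mul_one _).symm.trans (congrArg _ (map_one permHom).symm)
  · rw [← hooks_mul_theta_apply hτ b, theta_symm b, mul_assoc, mul_assoc,
      theta_mul_theta hab hne hb.symm]

lemma cut_mul_hooks_mul_ϑP {A : Finset (Fin n)} {τ : Perm (Fin n)} (hτ : τ * τ = 1) {a : Fin n}
    (ha : τ a ≠ a) (haA : a ∈ A) (hτaA : τ a ∈ A) :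
    cut A * hooks τ * ϑP a = cut A * hooks (τ * swap a (τ a)) := by
  have hττ := apply_apply_of_mul_self_eq_one hτ a
  set τ' := τ * swap a (τ a) with hτ'
  have hcomm_a : Commute (ϑP a) (hooks τ') := commute_ϑP_hooks (by simp [hτ', hττ])
  have hcomm_τa : Commute (ϑP (τ a)) (hooks τ') := commute_ϑP_hooks (by simp [hτ'])
  rw [hooks_eq_hooks_mul_theta hτ ha, ← hτ']
  calc cut A * (hooks τ' * theta a (τ a)) * ϑP a
      = cut A * (ϑP a * hooks τ') * theta a (τ a) * ϑP a := by
        simp only [← mul_assoc, cut_mul_ϑP haA]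
    _ = cut A * hooks τ' * (ϑP a * theta a (τ a) * ϑP a) := by
        rw [hcomm_a.eq]; simp only [mul_assoc]
    _ = cut A * (ϑP a * ϑP (τ a) * hooks τ') := by
        rw [ϑP_mul_theta_mul_ϑP ha.symm, mul_assoc, (hcomm_a.mul_left hcomm_τa).eq]
    _ = cut A * hooks τ' := by
        simp only [← mul_assoc, cut_mul_ϑP haA, cut_mul_ϑP hτaA]

lemma cut_mul_theta {A : Finset (Fin n)} {a b : Fin n} (hab : a ≠ b) (hb : b ∈ A) :
    cut A * theta a b = cut (insert a A) * theta a b := by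
  rw [cut_insert, ← cut_mul_ϑP hb, mul_assoc, ← ϑP_mul_ϑP_mul_theta hab, (commute_ϑP a b).eq,
    mul_assoc, mul_assoc, mul_assoc]

lemma permHom_mul_cut_mul_theta {A : Finset (Fin n)} {a b : Fin n} (p : Perm (Fin n)) (hab : a ≠ b)
    (ha : a ∉ A) (hb : b ∉ A) :
    permHom p * cut A * theta a b =
      theta (p a) (p b) * (permHom p * cut (insert b (insert a A)) * theta a b) := by
  have hcomm : Commute (theta a b) (cut A) := commute_cut fun c hc =>
    (commute_ϑP_theta (ne_of_mem_of_not_mem hc ha) (ne_of_mem_of_not_mem hc hb)).symm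
  calc permHom p * cut A * theta a b
      = permHom p * (cut A * theta a b) * ϑP a * ϑP b * theta a b := by
        nth_rw 1 [← theta_mul_ϑP_mul_ϑP_mul_theta hab]
        simp only [mul_assoc]
    _ = permHom p * theta a b * cut A * ϑP a * ϑP b * theta a b := by
        rw [← hcomm.eq]; simp only [mul_assoc]
    _ = theta (p a) (p b) * (permHom p * cut (insert b (insert a A)) * theta a b) := by
        rw [permHom_mul, conj_theta, cut_insert, cut_insert]; simp only [mul_assoc]

variable (n) in
/-- A diagram of `P𝔅_n`, written as a product of upper hooks, a permutation, cuts and lower hooks.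
The upper hooks and the lower hooks are the transpositions of the involutions `upper` and `lower`;
the lines of `perm` starting in `dead` are cut, and only points on cut lines may carry a hook. -/
structure NormalForm where
  upper : Perm (Fin n)
  perm : Perm (Fin n)
  dead : Finset (Fin n)
  lower : Perm (Fin n)
  upper_mul_self : upper * upper = 1
  lower_mul_self : lower * lower = 1
  upper_apply_perm : ∀ x ∉ dead, upper (perm x) = perm x
  lower_apply : ∀ x ∉ dead, lower x = x

namespace NormalForm

/-- The element of `T` represented by a normal form. -/
noncomputable def eval (N : NormalForm n) : PBMonoid n :=
  hooks N.upper * permHom N.perm * cut N.dead * hooks N.lower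

lemma mem_dead_of_lower_apply_ne (N : NormalForm n) {a : Fin n} (ha : N.lower a ≠ a) :
    a ∈ N.dead := by
  by_contra haN
  exact ha (N.lower_apply a haN)

lemma lower_apply_mem_dead (N : NormalForm n) {a : Fin n} (ha : N.lower a ≠ a) :
    N.lower a ∈ N.dead :=
  N.mem_dead_of_lower_apply_ne (N.lower.injective.ne ha)

lemma one_mem_range_eval : (1 : PBMonoid n) ∈ Set.range eval :=
  ⟨⟨1, 1, ∅, 1, mul_one 1, mul_one 1, fun _ _ => rfl, fun _ _ => rfl⟩, by
    simp only [eval, hooks_one, cut_empty, map_one, mul_one]⟩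

lemma eval_mul_permHom_mem_range (N : NormalForm n) (r : Perm (Fin n)) :
    N.eval * permHom r ∈ Set.range eval := by
  have hdead : ∀ x ∉ N.dead.map r⁻¹.toEmbedding, r x ∉ N.dead := fun x hx hrx =>
    hx (Finset.mem_map.2 ⟨r x, hrx, Perm.inv_eq_iff_eq.2 rfl⟩)
  refine ⟨⟨N.upper, N.perm * r, N.dead.map r⁻¹.toEmbedding, r⁻¹ * N.lower * r⁻¹⁻¹,
    N.upper_mul_self, ?_, fun x hx => N.upper_apply_perm _ (hdead x hx), fun x hx => ?_⟩, ?_⟩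
  · rw [conj_mul, N.lower_mul_self, mul_one, mul_inv_cancel]
  · rw [inv_inv, Perm.mul_apply, Perm.mul_apply, N.lower_apply _ (hdead x hx), Perm.inv_eq_iff_eq]
  · simp only [eval]
    rw [← conj_cut, ← conj_hooks _ N.lower_mul_self, map_mul permHom, mul_assoc,
      ← map_mul (conj r⁻¹), ← mul_assoc, mul_assoc (_ * _) (permHom r), ← mul_permHom]
    simp only [mul_assoc]

lemma eval_mul_ϑP_mem_range (N : NormalForm n) (a : Fin n) :
    N.eval * ϑP a ∈ Set.range eval := by
  by_cases ha : N.lower a = a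
  · refine ⟨⟨N.upper, N.perm, insert a N.dead, N.lower, N.upper_mul_self, N.lower_mul_self,
      fun x hx => N.upper_apply_perm x fun h => hx (Finset.mem_insert_of_mem h),
      fun x hx => N.lower_apply x fun h => hx (Finset.mem_insert_of_mem h)⟩, ?_⟩
    simp only [eval, cut_insert, mul_assoc, (commute_ϑP_hooks ha).eq]
  · refine ⟨⟨N.upper, N.perm, N.dead, N.lower * swap a (N.lower a), N.upper_mul_self,
      mul_swap_apply_mul_self N.lower_mul_self a, N.upper_apply_perm, fun x hx => ?_⟩, ?_⟩
    · rw [Perm.mul_apply, swap_apply_of_ne_of_ne, N.lower_apply x hx]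
      · exact (ne_of_mem_of_not_mem (N.mem_dead_of_lower_apply_ne ha) hx).symm
      · exact (ne_of_mem_of_not_mem (N.lower_apply_mem_dead ha) hx).symm
    · have hcut := cut_mul_hooks_mul_ϑP N.lower_mul_self ha (N.mem_dead_of_lower_apply_ne ha)
        (N.lower_apply_mem_dead ha)
      simp only [eval, mul_assoc] at hcut ⊢
      rw [hcut]

lemma eval_mul_theta_mem_range_of_mem_dead (N : NormalForm n) {a b : Fin n} (hab : a ≠ b)
    (ha : N.lower a = a) (hb : N.lower b = b) (hb_dead : b ∈ N.dead) :
    N.eval * theta a b ∈ Set.range eval := by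
  refine ⟨⟨N.upper, N.perm, insert a N.dead, N.lower * swap a b, N.upper_mul_self,
    mul_swap_mul_self N.lower_mul_self (by rw [ha, hb]),
    fun x hx => N.upper_apply_perm x fun h => hx (Finset.mem_insert_of_mem h), fun x hx => ?_⟩, ?_⟩
  · obtain ⟨hxa, hx_dead⟩ := not_or.1 (Finset.mem_insert.not.1 hx)
    rw [Perm.mul_apply, swap_apply_of_ne_of_ne hxa (ne_of_mem_of_not_mem hb_dead hx_dead).symm,
      N.lower_apply x hx_dead]
  · have hcut := cut_mul_theta hab hb_dead
    rw [eval, eval, hooks_mul_swap N.lower_mul_self hab ha hb, ← (commute_theta_hooks ha hb).eq]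
    simp only [mul_assoc, ← (commute_theta_hooks ha hb).eq]
    rw [← mul_assoc (cut _), ← hcut, mul_assoc]

lemma eval_mul_theta_mem_range_of_notMem_dead (N : NormalForm n) {a b : Fin n} (hab : a ≠ b)
    (ha : a ∉ N.dead) (hb : b ∉ N.dead) : N.eval * theta a b ∈ Set.range eval := by
  have ha_low := N.lower_apply a ha
  have hb_low := N.lower_apply b hb
  have ha_up := N.upper_apply_perm a ha
  have hb_up := N.upper_apply_perm b hb
  refine ⟨⟨N.upper * swap (N.perm a) (N.perm b), N.perm, insert b (insert a N.dead),
    N.lower * swap a b, mul_swap_mul_self N.upper_mul_self (by rw [ha_up, hb_up]),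
    mul_swap_mul_self N.lower_mul_self (by rw [ha_low, hb_low]), fun x hx => ?_, fun x hx => ?_⟩,
    ?_⟩
  · simp only [Finset.mem_insert, not_or] at hx
    rw [Perm.mul_apply, swap_apply_of_ne_of_ne (N.perm.injective.ne hx.2.1)
      (N.perm.injective.ne hx.1), N.upper_apply_perm x hx.2.2]
  · simp only [Finset.mem_insert, not_or] at hx
    rw [Perm.mul_apply, swap_apply_of_ne_of_ne hx.2.1 hx.1, N.lower_apply x hx.2.2]
  · have hcut := permHom_mul_cut_mul_theta N.perm hab ha hb
    have hcomm := (commute_theta_hooks ha_low hb_low).eq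
    rw [eval, hooks_mul_swap N.upper_mul_self (N.perm.injective.ne hab) ha_up hb_up,
      hooks_mul_swap N.lower_mul_self hab ha_low hb_low]
    calc hooks N.upper * theta (N.perm a) (N.perm b) * permHom N.perm *
          cut (insert b (insert a N.dead)) * (hooks N.lower * theta a b)
        = hooks N.upper * (theta (N.perm a) (N.perm b) *
          (permHom N.perm * cut (insert b (insert a N.dead)) * theta a b)) * hooks N.lower := by
          simp only [← hcomm, mul_assoc]
      _ = N.eval * theta a b := by
          rw [← hcut]
          simp only [eval, ← hcomm, mul_assoc]

lemma eval_mul_theta_mem_range (N : NormalForm n) {a b : Fin n} (hab : a ≠ b) :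
    N.eval * theta a b ∈ Set.range eval := by
  by_cases hb : N.lower b = b
  · by_cases ha : N.lower a = a
    · by_cases hb_dead : b ∈ N.dead
      · exact N.eval_mul_theta_mem_range_of_mem_dead hab ha hb hb_dead
      by_cases ha_dead : a ∈ N.dead
      · rw [theta_symm]
        exact N.eval_mul_theta_mem_range_of_mem_dead hab.symm hb ha ha_dead
      · exact N.eval_mul_theta_mem_range_of_notMem_dead hab ha_dead hb_dead
    · rw [theta_symm, eval, mul_assoc, hooks_mul_theta N.lower_mul_self hab.symm ha, ← mul_assoc]
      exact N.eval_mul_permHom_mem_range _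
  · rw [eval, mul_assoc, hooks_mul_theta N.lower_mul_self hab hb, ← mul_assoc]
    exact N.eval_mul_permHom_mem_range _

lemma eval_surjective : Function.Surjective (eval (n := n)) := by
  intro w
  have hw : w ∈ Submonoid.closure (Set.range (PresentedMonoid.of (PBRel n))) := by
    rw [PresentedMonoid.closure_range_of]
    exact Submonoid.mem_top w
  change w ∈ Set.range eval
  induction hw using Submonoid.closure_induction_right with
  | one => exact one_mem_range_eval
  | mul_right x y _ hy ih =>
    obtain ⟨N, rfl⟩ := ih
    obtain ⟨i | i | j, rfl⟩ := hy
    · have hmem := N.eval_mul_permHom_mem_range (swap (lo i) (hi i))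
      rwa [permHom_swap_lo_hi] at hmem
    · have hmem := N.eval_mul_theta_mem_range (lo_ne_hi i)
      rwa [theta_lo_hi] at hmem
    · exact N.eval_mul_ϑP_mem_range j

end NormalForm

end PBMonoid

/-! ### The representation of `T` by relations between labellings -/

/-- Binary relations on the Boolean labellings of `α`, composed from left to right. A diagram acts
by relating a labelling of its upper row to a labelling of its lower row when labels agree along
each of its edges. -/
structure LabelRel (α : Type*) where
  rel : (α → Bool) → (α → Bool) → Prop

namespace LabelRel

variable {α : Type*}

lemma ext {x y : LabelRel α} (h : ∀ f g, x.rel f g ↔ y.rel f g) : x = y := by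
  cases x
  cases y
  congr
  funext f g
  exact propext (h f g)

instance : Monoid (LabelRel α) where
  mul x y := ⟨fun f g => ∃ h, x.rel f h ∧ y.rel h g⟩
  one := ⟨fun f g => f = g⟩
  mul_assoc _ _ _ := ext fun _ _ =>
    ⟨fun ⟨h, ⟨k, hx, hy⟩, hz⟩ => ⟨k, hx, h, hy, hz⟩, fun ⟨k, hx, h, hy, hz⟩ => ⟨h, ⟨k, hx, hy⟩, hz⟩⟩
  one_mul _ := ext fun f _ => ⟨fun ⟨_, hf, hx⟩ => hf ▸ hx, fun hx => ⟨f, rfl, hx⟩⟩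
  mul_one _ := ext fun _ g => ⟨fun ⟨_, hx, hg⟩ => hg ▸ hx, fun hx => ⟨g, hx, rfl⟩⟩

lemma one_rel {f g : α → Bool} : (1 : LabelRel α).rel f g ↔ f = g := Iff.rfl

lemma mul_rel {x y : LabelRel α} {f g : α → Bool} :
    (x * y).rel f g ↔ ∃ h, x.rel f h ∧ y.rel h g := Iff.rfl

/-- The relation of the diagram of a permutation. -/
def ofPerm : Perm α →* LabelRel α where
  toFun p := ⟨fun f g => f ∘ p = g⟩
  map_one' := rfl
  map_mul' _ _ := ext fun _ _ => ⟨fun h => ⟨_, rfl, h⟩, fun ⟨_, hp, hq⟩ => by rw [← hq, ← hp]; rfl⟩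

/-- The relation of the diagram of `θ_{ab}`. -/
def hook (a b : α) : LabelRel α :=
  ⟨fun f g => f a = f b ∧ g a = g b ∧ ∀ c, c ≠ a → c ≠ b → f c = g c⟩

/-- The relation of the diagram of `ϑ_a`. -/
def cut (a : α) : LabelRel α := ⟨fun f g => ∀ c, c ≠ a → f c = g c⟩

lemma ofPerm_rel {p : Perm α} {f g : α → Bool} : (ofPerm p).rel f g ↔ f ∘ p = g := Iff.rfl

lemma hook_rel {a b : α} {f g : α → Bool} :
    (hook a b).rel f g ↔ f a = f b ∧ g a = g b ∧ ∀ c, c ≠ a → c ≠ b → f c = g c := Iff.rfl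

lemma cut_rel {a : α} {f g : α → Bool} : (cut a).rel f g ↔ ∀ c, c ≠ a → f c = g c := Iff.rfl

lemma ofPerm_mul_rel {p : Perm α} {x : LabelRel α} {f g : α → Bool} :
    (ofPerm p * x).rel f g ↔ x.rel (f ∘ p) g := by
  simp only [mul_rel, ofPerm_rel, exists_eq_left']

lemma hook_comm (a b : α) : hook a b = hook b a :=
  ext fun f g => by simp only [hook_rel, eq_comm, imp.swap]

lemma ofPerm_mul_hook (p : Perm α) (a b : α) :
    ofPerm p * hook a b = hook (p a) (p b) * ofPerm p := by
  refine ext fun f g => ?_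
  rw [ofPerm_mul_rel, mul_rel]
  simp only [ofPerm_rel, hook_rel]
  constructor
  · rintro ⟨hf, hg, hfg⟩
    refine ⟨g ∘ p.symm, ⟨hf, by simpa using hg, fun c hca hcb => ?_⟩, by ext; simp⟩
    simpa using hfg (p.symm c) (by simpa [symm_apply_eq]) (by simpa [symm_apply_eq])
  · rintro ⟨h, ⟨hf, hh, hfh⟩, rfl⟩
    exact ⟨hf, hh, fun c hca hcb => hfh _ (p.injective.ne hca) (p.injective.ne hcb)⟩

lemma ofPerm_mul_cut (p : Perm α) (a : α) : ofPerm p * cut a = cut (p a) * ofPerm p := by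
  refine ext fun f g => ?_
  rw [ofPerm_mul_rel, mul_rel]
  simp only [ofPerm_rel, cut_rel]
  constructor
  · intro h
    refine ⟨g ∘ p.symm, fun c hc => ?_, by ext; simp⟩
    simpa using h (p.symm c) (by simpa [symm_apply_eq])
  · rintro ⟨h, hfh, rfl⟩ c hc
    exact hfh _ (p.injective.ne hc)

lemma hook_mul_rel [DecidableEq α] {a b : α} {x : LabelRel α} {f g : α → Bool} :
    (hook a b * x).rel f g ↔ f a = f b ∧
      ∃ u, x.rel (fun c => if c = a ∨ c = b then u else f c) g := by
  constructor
  · rintro ⟨h, ⟨hf, hh, hfh⟩, hx⟩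
    refine ⟨hf, h a, ?_⟩
    convert hx using 1
    grind
  · rintro ⟨hf, u, hx⟩
    exact ⟨_, ⟨hf, by simp, by grind⟩, hx⟩

lemma cut_mul_rel [DecidableEq α] {a : α} {x : LabelRel α} {f g : α → Bool} :
    (cut a * x).rel f g ↔ ∃ u, x.rel (fun c => if c = a then u else f c) g := by
  constructor
  · rintro ⟨h, hfh, hx⟩
    refine ⟨h a, ?_⟩
    convert hx using 1
    grind [cut_rel]
  · rintro ⟨u, hx⟩
    exact ⟨_, by grind [cut_rel], hx⟩

lemma cut_mul_self (a : α) : cut a * cut a = cut a :=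
  ext fun f g => by
    classical
    simp only [cut_mul_rel, cut_rel, Bool.exists_bool]
    grind

lemma cut_mul_cut_comm (a b : α) : cut a * cut b = cut b * cut a :=
  ext fun f g => by
    classical
    simp only [cut_mul_rel, cut_rel, Bool.exists_bool]
    grind

lemma hook_mul_self (a b : α) : hook a b * hook a b = hook a b :=
  ext fun f g => by
    classical
    simp only [hook_mul_rel, hook_rel, Bool.exists_bool]
    grind

lemma hook_mul_hook_comm {a b c d : α} (hac : a ≠ c) (had : a ≠ d) (hbc : b ≠ c) (hbd : b ≠ d) :
    hook a b * hook c d = hook c d * hook a b :=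
  ext fun f g => by
    classical
    simp only [hook_mul_rel, hook_rel, Bool.exists_bool]
    grind

lemma hook_mul_hook_mul_hook {a b c : α} (hab : a ≠ b) (hac : a ≠ c) (hbc : b ≠ c) :
    hook a b * hook b c * hook a b = hook a b :=
  ext fun f g => by
    classical
    simp only [mul_assoc, hook_mul_rel, hook_rel, Bool.exists_bool]
    grind

lemma hook_mul_cut_comm {a b c : α} (hca : c ≠ a) (hcb : c ≠ b) :
    hook a b * cut c = cut c * hook a b :=
  ext fun f g => by
    classical
    simp only [hook_mul_rel, cut_mul_rel, hook_rel, cut_rel, Bool.exists_bool]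
    grind

lemma hook_mul_cut_eq (a b : α) : hook a b * cut a = hook a b * cut b :=
  ext fun f g => by
    classical
    simp only [hook_mul_rel, cut_rel, Bool.exists_bool]
    grind

lemma cut_mul_hook_eq (a b : α) : cut a * hook a b = cut b * hook a b :=
  ext fun f g => by
    classical
    simp only [cut_mul_rel, hook_rel, Bool.exists_bool]
    grind

lemma hook_mul_cut_mul_hook (a b : α) : hook a b * cut a * hook a b = hook a b :=
  ext fun f g => by
    classical
    simp only [mul_assoc, hook_mul_rel, cut_mul_rel, hook_rel, Bool.exists_bool]
    grind

lemma cut_mul_hook_mul_cut (a b : α) : cut a * hook a b * cut a = cut a * cut b :=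
  ext fun f g => by
    classical
    simp only [mul_assoc, hook_mul_rel, cut_mul_rel, cut_rel, Bool.exists_bool]
    grind

variable [DecidableEq α]

lemma cut_mul_swap_mul_cut (a b : α) : cut a * ofPerm (swap a b) * cut a = cut a * cut b :=
  ext fun f g => by
    simp only [mul_assoc, cut_mul_rel, ofPerm_mul_rel, cut_rel, Function.comp_apply,
      swap_apply_def, Bool.exists_bool]
    grind

lemma hook_mul_swap (a b : α) : hook a b * ofPerm (swap a b) = hook a b :=
  ext fun f g => by
    simp only [hook_mul_rel, ofPerm_rel, hook_rel, funext_iff, Function.comp_apply,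
      swap_apply_def, Bool.exists_bool]
    grind

lemma swap_mul_hook (a b : α) : ofPerm (swap a b) * hook a b = hook a b := by
  rw [ofPerm_mul_hook, swap_apply_left, swap_apply_right, hook_comm, hook_mul_swap]

lemma swap_mul_hook_mul_hook {a b c : α} (hab : a ≠ b) (hac : a ≠ c) (hbc : b ≠ c) :
    ofPerm (swap a b) * hook b c * hook a b = ofPerm (swap b c) * hook a b :=
  ext fun f g => by
    simp only [mul_assoc, ofPerm_mul_rel, hook_mul_rel, hook_rel, Function.comp_apply,
      swap_apply_def, Bool.exists_bool]
    grind

lemma hook_mul_hook_mul_swap {a b c : α} (hab : a ≠ b) (hac : a ≠ c) (hbc : b ≠ c) :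
    hook a b * hook b c * ofPerm (swap a b) = hook a b * ofPerm (swap b c) :=
  ext fun f g => by
    simp only [mul_assoc, hook_mul_rel, ofPerm_rel, funext_iff, Function.comp_apply,
      swap_apply_def, Bool.exists_bool]
    grind

end LabelRel

section orbitLabel

variable {α : Type*}

/-- The labelling of the points of the `τ`-orbit of `a` by `true`, when `τ` is an involution. -/
def orbitLabel [DecidableEq α] (τ : Perm α) (a : α) : α → Bool :=
  fun c => decide (c = a ∨ c = τ a)

lemma orbitLabel_comp [DecidableEq α] {τ : Perm α} (hτ : τ * τ = 1) (a : α) :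
    orbitLabel τ a ∘ τ = orbitLabel τ a := by
  have hττ := apply_apply_of_mul_self_eq_one hτ
  funext b
  simp only [Function.comp_apply, orbitLabel, decide_eq_decide]
  grind [τ.injective.eq_iff (a := b) (b := a)]

lemma eq_of_forall_comp_eq_iff {τ τ' : Perm α} (hτ : τ * τ = 1) (hτ' : τ' * τ' = 1)
    (h : ∀ f : α → Bool, f ∘ τ = f ↔ f ∘ τ' = f) : τ = τ' := by
  classical
  ext a
  have h₁ : τ' a = a ∨ τ' a = τ a := by
    simpa [orbitLabel] using congrFun ((h _).1 (orbitLabel_comp hτ a)) a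
  have h₂ : τ a = a ∨ τ a = τ' a := by
    simpa [orbitLabel] using congrFun ((h _).2 (orbitLabel_comp hτ' a)) a
  grind

end orbitLabel

namespace PBMonoid

variable {n : ℕ}

lemma lo_hi_ne_of_one_lt_dist {i j : Fin (n - 1)} (h : 1 < Nat.dist i.1 j.1) :
    lo i ≠ lo j ∧ lo i ≠ hi j ∧ hi i ≠ lo j ∧ hi i ≠ hi j := by
  simp only [Nat.dist] at h
  simp only [lo, hi, ne_eq, Fin.mk.injEq]
  omega

lemma of_dist_eq_one {P : Fin n → Fin n → Fin n → Fin n → Prop} {i j : Fin (n - 1)}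
    (h : Nat.dist i.1 j.1 = 1) (symm : ∀ a b c d, P a b c d → P b a d c)
    (of_distinct : ∀ a b c, a ≠ b → a ≠ c → b ≠ c → P a b b c) : P (lo i) (hi i) (lo j) (hi j) := by
  have hij : i.1 + 1 = j.1 ∨ j.1 + 1 = i.1 := by simp only [Nat.dist] at h; omega
  rcases hij with hij | hji
  · have e : lo j = hi i := Fin.ext hij.symm
    rw [e]
    exact of_distinct _ _ _ (lo_ne_hi i) (lo_ne_hi_of_le (Fin.le_def.2 (by omega)))
      (e ▸ lo_ne_hi j)
  · have e : hi j = lo i := Fin.ext hji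
    apply symm
    rw [e]
    exact of_distinct _ _ _ (lo_ne_hi i).symm (lo_ne_hi_of_le (Fin.le_def.2 (by omega))).symm
      (e ▸ (lo_ne_hi j).symm)

/-- The relation between labellings given by a generator of `T`. -/
def labelGen : PBGen n → LabelRel (Fin n)
  | .inl i => .ofPerm (swap (lo i) (hi i))
  | .inr (.inl i) => .hook (lo i) (hi i)
  | .inr (.inr j) => .cut j

open LabelRel in
lemma lift_labelGen_eq_of_rel {x y : FreeMonoid (PBGen n)} (h : PBRel n x y) :
    FreeMonoid.lift labelGen x = FreeMonoid.lift labelGen y := by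
  cases h <;> simp only [map_mul, map_one, fσ, fθ, fϑ, FreeMonoid.lift_eval_of, labelGen]
  case sigma_sq i => rw [← map_mul, swap_mul_self, map_one]
  case sigma_comm i j h =>
    have hne := lo_hi_ne_of_one_lt_dist h
    have hdisj : (swap (lo i) (hi i)).Disjoint (swap (lo j) (hi j)) :=
      Perm.disjoint_swap_swap (by simp [lo_ne_hi, hne])
    rw [← map_mul, hdisj.commute.eq, map_mul]
  case braid i j h =>
    refine of_dist_eq_one (P := fun a b c d => ofPerm (swap a b) * ofPerm (swap c d) *
      ofPerm (swap a b) = ofPerm (swap c d) * ofPerm (swap a b) * ofPerm (swap c d)) h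
      (fun a b c d => by rw [swap_comm a, swap_comm c]; exact id) fun _ _ _ hab hac hbc => ?_
    simp only [← map_mul, swap_braid hab hac hbc]
  case theta_idem i => exact hook_mul_self _ _
  case theta_comm i j h =>
    obtain ⟨h₁, h₂, h₃, h₄⟩ := lo_hi_ne_of_one_lt_dist h
    exact hook_mul_hook_comm h₁ h₂ h₃ h₄
  case theta_theta_theta i j h =>
    exact of_dist_eq_one (P := fun a b c d => hook a b * hook c d * hook a b = hook a b) h
      (fun a b c d => by rw [hook_comm a, hook_comm c]; exact id)
      fun _ _ _ => hook_mul_hook_mul_hook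
  case theta_sigma i => exact hook_mul_swap _ _
  case sigma_theta i => exact swap_mul_hook _ _
  case theta_sigma_comm i j h =>
    obtain ⟨h₁, h₂, h₃, h₄⟩ := lo_hi_ne_of_one_lt_dist h
    rw [ofPerm_mul_hook, swap_apply_of_ne_of_ne h₁ h₂, swap_apply_of_ne_of_ne h₃ h₄]
  case sigma_theta_theta i j h =>
    exact of_dist_eq_one (P := fun a b c d => ofPerm (swap a b) * hook c d * hook a b =
      ofPerm (swap c d) * hook a b) h
      (fun a b c d => by rw [hook_comm a, hook_comm c, swap_comm a, swap_comm c]; exact id)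
      fun _ _ _ => swap_mul_hook_mul_hook
  case theta_theta_sigma i j h =>
    exact of_dist_eq_one (P := fun a b c d => hook a b * hook c d * ofPerm (swap a b) =
      hook a b * ofPerm (swap c d)) h
      (fun a b c d => by rw [hook_comm a, hook_comm c, swap_comm a, swap_comm c]; exact id)
      fun _ _ _ => hook_mul_hook_mul_swap
  case v_idem j => exact cut_mul_self _
  case v_comm j j' h => exact cut_mul_cut_comm _ _
  case sigma_v i => rw [ofPerm_mul_cut, swap_apply_left]
  case sigma_v_comm i j h h' => rw [ofPerm_mul_cut, swap_apply_of_ne_of_ne h h']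
  case v_sigma_v i => exact cut_mul_swap_mul_cut _ _
  case theta_v_comm i j h h' => exact hook_mul_cut_comm h h'
  case theta_v i => exact hook_mul_cut_eq _ _
  case theta_vv i => rw [hook_mul_cut_eq, mul_assoc, cut_mul_self]
  case v_theta i => exact cut_mul_hook_eq _ _
  case vv_theta i => rw [mul_assoc, ← cut_mul_hook_eq, ← mul_assoc, cut_mul_self]
  case theta_v_theta i => exact hook_mul_cut_mul_hook _ _
  case v_theta_v i => exact cut_mul_hook_mul_cut _ _

/-- The homomorphism from `T` to the relations between labellings. -/
def labelHom : PBMonoid n →* LabelRel (Fin n) :=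
  PresentedMonoid.lift labelGen fun _ _ => lift_labelGen_eq_of_rel

lemma labelHom_σP (i : Fin (n - 1)) : labelHom (σP i) = .ofPerm (swap (lo i) (hi i)) :=
  PresentedMonoid.lift_of ..

lemma labelHom_θP (i : Fin (n - 1)) : labelHom (θP i) = .hook (lo i) (hi i) :=
  PresentedMonoid.lift_of ..

lemma labelHom_ϑP (a : Fin n) : labelHom (ϑP a) = .cut a :=
  PresentedMonoid.lift_of ..

lemma labelHom_permHom (p : Perm (Fin n)) : labelHom (permHom p) = .ofPerm p := by
  induction p using adjSwap_induction with
  | one => simp only [map_one]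
  | mul p q hp hq => simp only [map_mul, hp, hq]
  | swap_lo_hi i => rw [permHom_swap_lo_hi, labelHom_σP]

lemma labelHom_theta {a b : Fin n} (hab : a ≠ b) : labelHom (theta a b) = .hook a b := by
  obtain ⟨p, i, rfl, rfl⟩ := exists_perm_lo_hi hab
  rw [theta_apply_lo_hi, conj_apply, map_mul, map_mul, labelHom_θP, labelHom_permHom,
    labelHom_permHom, LabelRel.ofPerm_mul_hook, mul_assoc, ← map_mul, mul_inv_cancel, map_one,
    mul_one]

lemma labelHom_theta_rel_self {a b : Fin n} {f : Fin n → Bool} (h : f a = f b) :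
    (labelHom (theta a b)).rel f f := by
  rcases eq_or_ne a b with rfl | hab
  · rw [theta_self, map_one, LabelRel.one_rel]
  · rw [labelHom_theta hab, LabelRel.hook_rel]
    exact ⟨h, h, fun _ _ _ => rfl⟩

section hooks

variable {τ : Perm (Fin n)} {f g : Fin n → Bool}

lemma labelHom_hooks_rel_self (h : f ∘ τ = f) : (labelHom (hooks τ)).rel f f := by
  let S : Submonoid (PBMonoid n) :=
    { carrier := {x | (labelHom x).rel f f}
      one_mem' := by rw [Set.mem_ofPred_eq, map_one, LabelRel.one_rel]
      mul_mem' := fun hx hy => by rw [Set.mem_ofPred_eq, map_mul]; exact ⟨f, hx, hy⟩ }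
  refine S.list_prod_mem fun x hx => ?_
  obtain ⟨a, _, rfl⟩ := List.mem_map.1 hx
  exact labelHom_theta_rel_self (congrFun h a).symm

lemma eq_of_labelHom_hooks_rel (h : (labelHom (hooks τ)).rel f g) {c : Fin n} (hc : τ c = c) :
    f c = g c := by
  let S : Submonoid (PBMonoid n) :=
    { carrier := {x | ∀ f g, (labelHom x).rel f g → f c = g c}
      one_mem' := fun f g h => by rw [map_one, LabelRel.one_rel] at h; rw [h]
      mul_mem' := fun hx hy f g h => by
        rw [map_mul] at h
        obtain ⟨k, hfk, hkg⟩ := h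
        rw [hx _ _ hfk, hy _ _ hkg] }
  refine S.list_prod_mem (fun x hx f g h => ?_) f g h
  obtain ⟨a, _, rfl⟩ := List.mem_map.1 hx
  rcases eq_or_ne (τ a) a with ha | ha
  · rw [ha, theta_self, map_one, LabelRel.one_rel] at h
    rw [h]
  · rw [labelHom_theta ha.symm, LabelRel.hook_rel] at h
    exact h.2.2 c (by rintro rfl; exact ha hc) (by rintro rfl; exact ha (τ.injective hc))

lemma right_comp_eq_of_labelHom_hooks_rel (hτ : τ * τ = 1) (h : (labelHom (hooks τ)).rel f g) :
    g ∘ τ = g := by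
  funext a
  rcases eq_or_ne (τ a) a with ha | ha
  · rw [Function.comp_apply, ha]
  rw [← hooks_mul_theta_apply hτ a, map_mul, labelHom_theta ha.symm] at h
  obtain ⟨_, _, hk⟩ := h
  exact hk.2.1.symm

lemma left_comp_eq_of_labelHom_hooks_rel (hτ : τ * τ = 1) (h : (labelHom (hooks τ)).rel f g) :
    f ∘ τ = f := by
  funext a
  rcases eq_or_ne (τ a) a with ha | ha
  · rw [Function.comp_apply, ha]
  rw [← hooks_mul_theta_apply hτ a, ← (commute_hooks fun b => commute_theta_apply hτ a b).eq,
    map_mul, labelHom_theta ha.symm] at h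
  obtain ⟨_, hk, _⟩ := h
  exact hk.1.symm

end hooks

lemma labelHom_cut_rel {A : Finset (Fin n)} {f g : Fin n → Bool} :
    (labelHom (cut A)).rel f g ↔ ∀ c ∉ A, f c = g c := by
  induction A using Finset.induction_on generalizing g with
  | empty => simp [cut_empty, LabelRel.one_rel, funext_iff]
  | insert a A _ ih =>
    rw [cut_insert, map_mul, labelHom_ϑP, LabelRel.mul_rel]
    simp only [ih, LabelRel.cut_rel]
    constructor
    · rintro ⟨h, hfh, hhg⟩ c hc
      rw [Finset.mem_insert, not_or] at hc
      rw [hfh c hc.2, hhg c hc.1]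
    · intro hfg
      refine ⟨fun c => if c = a then f a else g c, fun c hc => ?_, fun c hc => if_neg hc⟩
      grind

namespace NormalForm

variable (N : NormalForm n) {f g : Fin n → Bool}

lemma labelHom_eval_rel : (labelHom N.eval).rel f g ↔
    f ∘ N.upper = f ∧ g ∘ N.lower = g ∧ ∀ b ∉ N.dead, f (N.perm b) = g b := by
  rw [eval, mul_assoc, mul_assoc, map_mul, map_mul, map_mul, labelHom_permHom, LabelRel.mul_rel]
  simp only [LabelRel.ofPerm_mul_rel]
  simp only [LabelRel.mul_rel, labelHom_cut_rel]
  constructor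
  · rintro ⟨h, hfh, k, hhk, hkg⟩
    refine ⟨left_comp_eq_of_labelHom_hooks_rel N.upper_mul_self hfh,
      right_comp_eq_of_labelHom_hooks_rel N.lower_mul_self hkg, fun b hb => ?_⟩
    rw [eq_of_labelHom_hooks_rel hfh (N.upper_apply_perm b hb),
      ← eq_of_labelHom_hooks_rel hkg (N.lower_apply b hb)]
    exact hhk b hb
  · rintro ⟨hf, hg, hfg⟩
    exact ⟨f, labelHom_hooks_rel_self hf, g, hfg, labelHom_hooks_rel_self hg⟩

lemma exists_labelHom_eval_rel_left (hf : f ∘ N.upper = f) :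
    ∃ g, (labelHom N.eval).rel f g := by
  refine ⟨fun c => if c ∈ N.dead then false else f (N.perm c),
    N.labelHom_eval_rel.2 ⟨hf, funext fun a => ?_, fun b hb => (if_neg hb).symm⟩⟩
  rcases eq_or_ne (N.lower a) a with ha | ha
  · rw [Function.comp_apply, ha]
  · simp [N.mem_dead_of_lower_apply_ne ha, N.lower_apply_mem_dead ha]

lemma exists_labelHom_eval_rel_right (hg : g ∘ N.lower = g) :
    ∃ f, (labelHom N.eval).rel f g := by
  have hdead {c : Fin n} (hc : N.upper c ≠ c) : N.perm.symm c ∈ N.dead := by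
    by_contra h
    exact hc (by simpa using N.upper_apply_perm _ h)
  refine ⟨fun c => if N.perm.symm c ∈ N.dead then false else g (N.perm.symm c),
    N.labelHom_eval_rel.2 ⟨funext fun a => ?_, hg, fun b hb => by simp [hb]⟩⟩
  rcases eq_or_ne (N.upper a) a with ha | ha
  · rw [Function.comp_apply, ha]
  · simp [hdead ha, hdead (N.upper.injective.ne ha)]

variable {N} {N' : NormalForm n}

lemma upper_eq_of_eval_eq (h : N.eval = N'.eval) : N.upper = N'.upper := by
  refine eq_of_forall_comp_eq_iff N.upper_mul_self N'.upper_mul_self fun f => ⟨fun hf => ?_,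
    fun hf => ?_⟩
  · obtain ⟨g, hg⟩ := N.exists_labelHom_eval_rel_left hf
    exact (N'.labelHom_eval_rel.1 (h ▸ hg)).1
  · obtain ⟨g, hg⟩ := N'.exists_labelHom_eval_rel_left hf
    exact (N.labelHom_eval_rel.1 (h ▸ hg)).1

lemma lower_eq_of_eval_eq (h : N.eval = N'.eval) : N.lower = N'.lower := by
  refine eq_of_forall_comp_eq_iff N.lower_mul_self N'.lower_mul_self fun g => ⟨fun hg => ?_,
    fun hg => ?_⟩
  · obtain ⟨f, hf⟩ := N.exists_labelHom_eval_rel_right hg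
    exact (N'.labelHom_eval_rel.1 (h ▸ hf)).2.1
  · obtain ⟨f, hf⟩ := N'.exists_labelHom_eval_rel_right hg
    exact (N.labelHom_eval_rel.1 (h ▸ hf)).2.1

lemma dead_subset_of_eval_eq (h : N.eval = N'.eval) : N.dead ⊆ N'.dead := by
  intro b hb
  by_contra hb'
  have hlower : N.lower b = b := by rw [lower_eq_of_eval_eq h, N'.lower_apply b hb']
  have hrel : (labelHom N.eval).rel (fun _ => false) (orbitLabel N.lower b) := by
    refine N.labelHom_eval_rel.2 ⟨rfl, orbitLabel_comp N.lower_mul_self b, fun c hc => ?_⟩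
    have hcb : c ≠ b := fun e => hc (e ▸ hb)
    simp [orbitLabel, hlower, hcb]
  rw [h, labelHom_eval_rel] at hrel
  simpa [orbitLabel] using hrel.2.2 b hb'

lemma dead_eq_of_eval_eq (h : N.eval = N'.eval) : N.dead = N'.dead :=
  (dead_subset_of_eval_eq h).antisymm (dead_subset_of_eval_eq h.symm)

lemma perm_apply_eq_of_eval_eq (h : N.eval = N'.eval) {b : Fin n} (hb : b ∉ N.dead) :
    N.perm b = N'.perm b := by
  obtain ⟨g, hg⟩ := N.exists_labelHom_eval_rel_left (orbitLabel_comp N.upper_mul_self (N.perm b))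
  have hlabel : orbitLabel N.upper (N.perm b) (N.perm b) = g b :=
    (N.labelHom_eval_rel.1 hg).2.2 b hb
  have hlabel' : orbitLabel N.upper (N.perm b) (N'.perm b) = g b :=
    (N'.labelHom_eval_rel.1 (h ▸ hg)).2.2 b (dead_eq_of_eval_eq h ▸ hb)
  rw [← hlabel] at hlabel'
  simpa [orbitLabel, N.upper_apply_perm b hb, eq_comm] using hlabel'

end NormalForm

end PBMonoid

/-! ### Diagrams -/

/-- One row of a partial Brauer diagram on `α`: an involution whose nontrivial orbits are the edges
inside the row, together with the set of all points which are not on an edge to the other row. -/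
abbrev HalfDiagram (α : Type*) [Fintype α] [DecidableEq α] :=
  {c : Perm α × Finset α // c.1 * c.1 = 1 ∧ c.1.support ⊆ c.2}

namespace HalfDiagram

variable {α : Type*} [Fintype α] [DecidableEq α]

/-- The involution pairing the points of a row which are joined by an edge. -/
abbrev invol (c : HalfDiagram α) : Perm α := c.1.1

/-- The points of a row which are not joined to the other row. -/
abbrev dead (c : HalfDiagram α) : Finset α := c.1.2

lemma invol_apply (c : HalfDiagram α) {x : α} (hx : x ∉ c.dead) : c.invol x = x :=
  Perm.notMem_support.1 fun h => hx (c.2.2 h)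

end HalfDiagram

/-- A partial Brauer diagram on `α`: its upper and its lower row, and the bijection given by the
edges between the two rows. -/
abbrev Diagram (α : Type*) [Fintype α] [DecidableEq α] :=
  Σ c : HalfDiagram α × HalfDiagram α, {x // x ∉ c.2.dead} ≃ {x // x ∉ c.1.dead}

namespace Diagram

open PBMonoid

variable {n : ℕ}

/-- The normal form of a diagram; its permutation is an arbitrary extension of the bijection between
the two rows. -/
noncomputable def toNormalForm (d : Diagram (Fin n)) : NormalForm n where
  upper := d.1.1.invol
  perm := d.2.extendSubtype
  dead := d.1.2.dead
  lower := d.1.2.invol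
  upper_mul_self := d.1.1.2.1
  lower_mul_self := d.1.2.2.1
  upper_apply_perm x hx := d.1.1.invol_apply (d.2.extendSubtype_mem x hx)
  lower_apply _ hx := d.1.2.invol_apply hx

lemma toNormalForm_perm_apply (d : Diagram (Fin n)) (x : {x // x ∉ d.1.2.dead}) :
    d.toNormalForm.perm x = d.2 x :=
  d.2.extendSubtype_apply_of_mem x x.2

lemma eval_toNormalForm_injective :
    Function.Injective fun d : Diagram (Fin n) => d.toNormalForm.eval := by
  intro d d' h
  have hperm (x) (hx : x ∉ d.1.2.dead) : d.toNormalForm.perm x = d'.toNormalForm.perm x :=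
    NormalForm.perm_apply_eq_of_eval_eq h hx
  have hupper : d.1.1.invol = d'.1.1.invol := NormalForm.upper_eq_of_eval_eq h
  have hlower : d.1.2 = d'.1.2 :=
    Subtype.ext (Prod.ext (NormalForm.lower_eq_of_eval_eq h) (NormalForm.dead_eq_of_eval_eq h))
  obtain ⟨⟨c₁, c₂⟩, q⟩ := d
  obtain ⟨⟨c₁', c₂'⟩, q'⟩ := d'
  obtain rfl : c₂ = c₂' := hlower
  have hq (x) : (q x : Fin n) = q' x := by
    rw [← toNormalForm_perm_apply ⟨(c₁, c₂), q⟩, hperm x x.2, toNormalForm_perm_apply]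
  have hdead : c₁.dead = c₁'.dead := by
    ext x
    refine not_iff_not.1 ⟨fun hx => ?_, fun hx => ?_⟩
    · simpa [← hq] using (q' (q.symm ⟨x, hx⟩)).2
    · simpa [hq] using (q (q'.symm ⟨x, hx⟩)).2
  obtain rfl : c₁ = c₁' := Subtype.ext (Prod.ext hupper hdead)
  obtain rfl : q = q' := Equiv.ext fun x => Subtype.ext (hq x)
  rfl

lemma eval_toNormalForm_surjective :
    Function.Surjective fun d : Diagram (Fin n) => d.toNormalForm.eval := by
  intro w
  obtain ⟨N, rfl⟩ := NormalForm.eval_surjective w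
  have hmem (x : Fin n) : x ∉ N.dead ↔ N.perm x ∉ N.dead.map N.perm.toEmbedding := by simp
  have hupper : N.upper.support ⊆ N.dead.map N.perm.toEmbedding := fun x hx => by
    by_contra h
    obtain ⟨y, rfl⟩ := N.perm.surjective x
    exact Perm.mem_support.1 hx (N.upper_apply_perm y ((hmem y).2 h))
  have hlower : N.lower.support ⊆ N.dead := fun x hx =>
    N.mem_dead_of_lower_apply_ne (Perm.mem_support.1 hx)
  let d : Diagram (Fin n) := ⟨⟨⟨(N.upper, N.dead.map N.perm.toEmbedding), N.upper_mul_self, hupper⟩,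
    ⟨(N.lower, N.dead), N.lower_mul_self, hlower⟩⟩, N.perm.subtypeEquiv hmem⟩
  have hperm : permHom d.toNormalForm.perm * cut N.dead = permHom N.perm * cut N.dead :=
    permHom_mul_cut_congr fun x hx => d.toNormalForm_perm_apply ⟨x, hx⟩
  refine ⟨d, ?_⟩
  calc d.toNormalForm.eval
      = hooks N.upper * (permHom d.toNormalForm.perm * cut N.dead) * hooks N.lower := by
        rw [← mul_assoc]; rfl
    _ = N.eval := by rw [hperm, ← mul_assoc]; rfl

/-- Diagrams are in bijection with the elements of `T`. -/
noncomputable def equivPBMonoid : Diagram (Fin n) ≃ PBMonoid n :=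
  .ofBijective _ ⟨eval_toNormalForm_injective, eval_toNormalForm_surjective⟩

end Diagram

/-! ### Counting diagrams -/

section Counting

open Finset

lemma sum_range_add_eq {M : Type*} [AddCommMonoid M] {g : ℕ → M} {i N : ℕ}
    (hlt : ∀ j < i, g j = 0) (hge : ∀ j, N ≤ j → g j = 0) :
    ∑ t ∈ range N, g (i + t) = ∑ j ∈ range N, g j := by
  calc ∑ t ∈ range N, g (i + t)
      = ∑ j ∈ range (i + N), g j := by
        rw [sum_range_add, sum_eq_zero fun j hj => hlt j (mem_range.1 hj), zero_add]
    _ = ∑ j ∈ range N, g j := by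
        refine (sum_subset (range_subset_range.2 (Nat.le_add_left N i)) fun j _ hj => ?_).symm
        exact hge j (not_lt.1 (mt mem_range.2 hj))

lemma sum_range_sum_range_of_symm {M : Type*} [NonAssocSemiring M] {f : ℕ → ℕ → M} {N : ℕ}
    (hsymm : ∀ i j, f i j = f j i) (hge : ∀ i j, N ≤ j → f i j = 0) :
    ∑ i ∈ range N, ∑ j ∈ range N, f i j =
      ∑ i ∈ range N, ∑ m ∈ range N, (if m = 0 then 1 else 2) * f i (i + m) := by
  let upper (i j : ℕ) : M := if i ≤ j then f i j else 0
  let strictUpper (i j : ℕ) : M := if i < j then f i j else 0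
  have hsplit (i j) : f i j = upper i j + strictUpper j i := by
    simp only [upper, strictUpper, hsymm j i]
    grind
  have hshift (i) : ∑ j ∈ range N, (upper i j + strictUpper i j) =
      ∑ m ∈ range N, (upper i (i + m) + strictUpper i (i + m)) := by
    refine (sum_range_add_eq (g := fun j => upper i j + strictUpper i j) ?_ ?_).symm
    · intro j hj
      simp [upper, strictUpper, hj.not_ge, hj.not_gt]
    · intro j hj
      simp [upper, strictUpper, hge i j hj]
  calc ∑ i ∈ range N, ∑ j ∈ range N, f i j
      = ∑ i ∈ range N, ∑ j ∈ range N, (upper i j + strictUpper i j) := by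
        simp only [hsplit, sum_add_distrib]
        rw [sum_comm (f := fun i j => strictUpper j i)]
    _ = ∑ i ∈ range N, ∑ m ∈ range N, (if m = 0 then 1 else 2) * f i (i + m) := by
        refine sum_congr rfl fun i _ => (hshift i).trans (sum_congr rfl fun m _ => ?_)
        rcases eq_or_ne m 0 with rfl | hm
        · simp [upper, strictUpper]
        · simp [upper, strictUpper, hm, Nat.pos_of_ne_zero hm, two_mul]

variable (α : Type*) [Fintype α] [DecidableEq α]

/-- The number of half-diagrams with `k` edges and `s` dead points. -/
def halfDiagramCount (k s : ℕ) : ℕ :=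
  #{c : HalfDiagram α | c.invol.cycleType.card = k ∧ #c.dead = s}

variable {α}

lemma cycleType_eq_replicate_two_iff {τ : Perm α} {k : ℕ} :
    τ.cycleType = .replicate k 2 ↔ τ * τ = 1 ∧ τ.cycleType.card = k := by
  have : Fact (Nat.Prime 2) := ⟨Nat.prime_two⟩
  rw [Multiset.eq_replicate, ← Perm.pow_prime_eq_one_iff, pow_two, and_comm]

lemma card_support_of_cycleType_eq {τ : Perm α} {k : ℕ} (h : τ.cycleType = .replicate k 2) :
    #τ.support = 2 * k := by
  rw [← Perm.sum_cycleType, h, Multiset.sum_replicate, smul_eq_mul, mul_comm]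

lemma HalfDiagram.two_mul_card_cycleType_le (c : HalfDiagram α) :
    2 * c.invol.cycleType.card ≤ #c.dead := by
  rw [← card_support_of_cycleType_eq (cycleType_eq_replicate_two_iff.2 ⟨c.2.1, rfl⟩)]
  exact card_le_card c.2.2

lemma halfDiagramCount_of_lt {k s : ℕ} (h : s < 2 * k) : halfDiagramCount α k s = 0 := by
  rw [halfDiagramCount, card_eq_zero, filter_eq_empty_iff]
  rintro c - ⟨rfl, rfl⟩
  exact c.two_mul_card_cycleType_le.not_gt h

lemma halfDiagramCount_of_card_lt {k s : ℕ} (h : Fintype.card α < s) :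
    halfDiagramCount α k s = 0 := by
  rw [halfDiagramCount, card_eq_zero, filter_eq_empty_iff]
  rintro c - ⟨-, rfl⟩
  exact c.dead.card_le_univ.not_gt h

lemma halfDiagramCount_eq_mul_choose {k s : ℕ} (h : 2 * k ≤ s) :
    halfDiagramCount α k s = #{τ : Perm α | τ.cycleType = .replicate k 2} *
      (Fintype.card α - 2 * k).choose (s - 2 * k) := by
  calc halfDiagramCount α k s
      = #(({τ : Perm α | τ.cycleType = .replicate k 2} : Finset (Perm α)).sigma fun τ =>
          {A ∈ univ.powersetCard s | τ.support ⊆ A}) := by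
        refine card_bij (fun c _ => ⟨c.invol, c.dead⟩) ?_ ?_ ?_
        · simp only [mem_sigma, mem_filter, mem_univ, mem_powersetCard, subset_univ, true_and]
          exact fun c hc => ⟨cycleType_eq_replicate_two_iff.2 ⟨c.2.1, hc.1⟩, hc.2, c.2.2⟩
        · intro c _ c' _ h
          simp only [Sigma.mk.injEq, heq_eq_eq] at h
          exact Subtype.ext (Prod.ext h.1 h.2)
        · rintro ⟨τ, A⟩ h
          simp only [mem_sigma, mem_filter, mem_univ, mem_powersetCard, subset_univ, true_and,
            cycleType_eq_replicate_two_iff] at h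
          exact ⟨⟨(τ, A), h.1.1, h.2.2⟩, (mem_filter_univ _).2 ⟨h.1.2, h.2.1⟩, rfl⟩
    _ = _ := by
        rw [card_sigma]
        refine sum_const_nat fun τ hτ => ?_
        have hcard := card_support_of_cycleType_eq (mem_filter.1 hτ).2
        rw [card_filter_powersetCard_subset _ _ _ (subset_univ _) (hcard.trans_le h), hcard,
          card_univ]

lemma card_cycleType_eq_replicate_two_mul {k : ℕ} (h : 2 * k ≤ Fintype.card α) :
    #{τ : Perm α | τ.cycleType = .replicate k 2} *
      (k.factorial * 2 ^ k * (Fintype.card α - 2 * k).factorial) = (Fintype.card α).factorial := by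
  have hprod : ∏ x ∈ (Multiset.replicate k 2).toFinset,
      ((Multiset.replicate k 2).count x).factorial = k.factorial := by
    rcases eq_or_ne k 0 with rfl | hk
    · simp
    · simp [Multiset.toFinset_replicate, hk]
  have hcard := Perm.card_of_cycleType_mul_eq (α := α) (.replicate k 2)
  rw [hprod, if_pos ⟨by simpa [mul_comm] using h, fun a ha => (Multiset.eq_of_mem_replicate ha).ge⟩,
    Multiset.sum_replicate, Multiset.prod_replicate, smul_eq_mul, mul_comm k 2] at hcard
  rw [← hcard]
  ring

lemma halfDiagramCount_mul {k s : ℕ} (hk : 2 * k ≤ s) (hs : s ≤ Fintype.card α) :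
    halfDiagramCount α k s *
      (k.factorial * 2 ^ k * (s - 2 * k).factorial * (Fintype.card α - s).factorial) =
      (Fintype.card α).factorial := by
  have hchoose := Nat.choose_mul_factorial_mul_factorial
    (show s - 2 * k ≤ Fintype.card α - 2 * k by omega)
  rw [show Fintype.card α - 2 * k - (s - 2 * k) = Fintype.card α - s by omega] at hchoose
  rw [halfDiagramCount_eq_mul_choose hk, ← card_cycleType_eq_replicate_two_mul (hk.trans hs),
    ← hchoose]
  ring

lemma card_filter_card_dead_eq (s : ℕ) : #{c : HalfDiagram α | #c.dead = s} =
    ∑ k ∈ range (Fintype.card α + 1), halfDiagramCount α k s := by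
  rw [card_eq_sum_card_fiberwise (f := fun c => c.invol.cycleType.card)
    (t := range (Fintype.card α + 1))]
  · simp only [filter_filter, halfDiagramCount, and_comm]
  · intro c _
    have := c.two_mul_card_cycleType_le
    have := c.dead.card_le_univ
    simp only [coe_range, Set.mem_Iio]
    omega

lemma card_notMem_equiv_notMem (A B : Finset α) : Fintype.card ({x // x ∉ A} ≃ {x // x ∉ B}) =
    if #A = #B then (Fintype.card α - #B).factorial else 0 := by
  have hcard (C : Finset α) : Fintype.card {x // x ∉ C} = Fintype.card α - #C := by
    rw [Fintype.card_subtype_compl, Fintype.card_coe]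
  split_ifs with h
  · rw [Fintype.card_equiv (Fintype.equivOfCardEq (by rw [hcard, hcard, h])), hcard, h]
  · refine Fintype.card_eq_zero_iff.2 ⟨fun q => h ?_⟩
    have hq := Fintype.card_congr q
    have := A.card_le_univ
    have := B.card_le_univ
    rw [hcard, hcard] at hq
    omega

lemma card_diagram : Fintype.card (Diagram α) = ∑ s ∈ range (Fintype.card α + 1),
    #{c : HalfDiagram α | #c.dead = s} ^ 2 * (Fintype.card α - s).factorial := by
  rw [Fintype.card_sigma, Fintype.sum_prod_type]
  simp only [card_notMem_equiv_notMem, ← sum_filter, sum_const, smul_eq_mul]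
  rw [← sum_fiberwise_of_maps_to' (g := fun c : HalfDiagram α => #c.dead)
    (t := range (Fintype.card α + 1)) (fun c _ => mem_range_succ_iff.2 c.dead.card_le_univ)
    fun s => #{c : HalfDiagram α | #c.dead = s} * (Fintype.card α - s).factorial]
  simp only [sum_const, smul_eq_mul, sq, mul_assoc]

variable (α) in
/-- The number of diagrams with `k` edges inside the upper row, `k'` edges inside the lower row and
`s` points in each row which are not joined to the other row. -/
def diagramCount (k k' s : ℕ) : ℕ :=
  halfDiagramCount α k s * halfDiagramCount α k' s * (Fintype.card α - s).factorial

lemma diagramCount_comm (k k' s : ℕ) : diagramCount α k k' s = diagramCount α k' k s := by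
  rw [diagramCount, diagramCount, mul_comm (halfDiagramCount α k s)]

lemma diagramCount_of_lt {k k' s : ℕ} (h : s < 2 * k') : diagramCount α k k' s = 0 := by
  rw [diagramCount, halfDiagramCount_of_lt h, mul_zero, zero_mul]

lemma diagramCount_of_card_lt {k k' s : ℕ} (h : Fintype.card α < s) :
    diagramCount α k k' s = 0 := by
  rw [diagramCount, halfDiagramCount_of_card_lt h, zero_mul, zero_mul]

lemma diagramCount_eq_div {k m t : ℕ} (h : 2 * (k + m) + t ≤ Fintype.card α) :
    diagramCount α k (k + m) (2 * (k + m) + t) = (Fintype.card α).factorial ^ 2 /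
      (k.factorial * 2 ^ k * (t + 2 * m).factorial * (k + m).factorial * 2 ^ (k + m) *
        t.factorial * (Fintype.card α - 2 * k - 2 * m - t).factorial) := by
  have hk := halfDiagramCount_mul (α := α) (show 2 * k ≤ 2 * (k + m) + t by omega) h
  have hkm := halfDiagramCount_mul (α := α) (show 2 * (k + m) ≤ 2 * (k + m) + t by omega) h
  rw [show 2 * (k + m) + t - 2 * k = t + 2 * m by omega] at hk
  rw [Nat.add_sub_cancel_left] at hkm
  rw [show Fintype.card α - 2 * k - 2 * m - t = Fintype.card α - (2 * (k + m) + t) by omega]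
  refine (Nat.div_eq_of_eq_mul_left (by positivity) ?_).symm
  rw [pow_two, diagramCount]
  nth_rw 1 [← hk]
  rw [← hkm]
  ring

lemma card_diagram_eq_sum_diagramCount : Fintype.card (Diagram α) =
    ∑ s ∈ range (Fintype.card α + 1), ∑ k ∈ range (Fintype.card α + 1),
      ∑ k' ∈ range (Fintype.card α + 1), diagramCount α k k' s := by
  rw [card_diagram]
  refine sum_congr rfl fun s _ => ?_
  rw [card_filter_card_dead_eq, pow_two, sum_mul_sum]
  simp only [sum_mul, diagramCount]

lemma card_diagram_eq_sum_div {n : ℕ} (hn : Fintype.card α = n) : Fintype.card (Diagram α) =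
    ∑ k ∈ range (n + 1), ∑ m ∈ range (n + 1), ∑ t ∈ range (n + 1),
      if 2 * k + 2 * m + t ≤ n then
        (if m = 0 then 1 else 2) *
          (n.factorial ^ 2 /
            (k.factorial * 2 ^ k * (t + 2 * m).factorial * (k + m).factorial * 2 ^ (k + m) *
              t.factorial * (n - 2 * k - 2 * m - t).factorial))
      else 0 := by
  have hge (s k k') (h : n + 1 ≤ k') : diagramCount α k k' s = 0 := by
    rcases lt_or_ge s (2 * k') with hs | hs
    · exact diagramCount_of_lt hs
    · exact diagramCount_of_card_lt (by omega)
  calc Fintype.card (Diagram α)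
      = ∑ s ∈ range (n + 1), ∑ k ∈ range (n + 1), ∑ m ∈ range (n + 1),
          (if m = 0 then 1 else 2) * diagramCount α k (k + m) s := by
        rw [card_diagram_eq_sum_diagramCount, hn]
        exact sum_congr rfl fun s _ =>
          sum_range_sum_range_of_symm (fun k k' => diagramCount_comm k k' s) (hge s)
    _ = ∑ k ∈ range (n + 1), ∑ m ∈ range (n + 1), ∑ s ∈ range (n + 1),
          (if m = 0 then 1 else 2) * diagramCount α k (k + m) s := by
        rw [sum_comm]
        exact sum_congr rfl fun k _ => sum_comm
    _ = ∑ k ∈ range (n + 1), ∑ m ∈ range (n + 1), ∑ t ∈ range (n + 1),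
          (if m = 0 then 1 else 2) * diagramCount α k (k + m) (2 * (k + m) + t) := by
        refine sum_congr rfl fun k _ => sum_congr rfl fun m _ => (sum_range_add_eq ?_ ?_).symm
        · exact fun s hs => by rw [diagramCount_of_lt hs, mul_zero]
        · exact fun s hs => by rw [diagramCount_of_card_lt (hn.trans_lt hs), mul_zero]
    _ = _ := by
        refine sum_congr rfl fun k _ => sum_congr rfl fun m _ => sum_congr rfl fun t _ => ?_
        by_cases h : 2 * k + 2 * m + t ≤ n
        · rw [if_pos h, diagramCount_eq_div (by omega), hn]
        · rw [if_neg h, diagramCount_of_card_lt (by omega), mul_zero]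

end Counting

/-- Theorem 3 of Kudryavtseva–Mazorchuk, in cardinality form: the monoid `T` is finite
and its cardinality equals
`Σ_{2k+2m+t ≤ n} c(m) (n!)² / (k! 2^k (t+2m)! (k+m)! 2^{k+m} t! (n-2k-2m-t)!)`,
where `c(m) = 1` if `m = 0` and `c(m) = 2` otherwise — the cardinality of the partial
Brauer monoid `P𝔅_n` (to which `T` is isomorphic via `σ_i ↦ s_i`, `θ_i ↦ π_i`,
`ϑ_i ↦ ς_i`). -/
theorem PB_card_eq (n : ℕ) (hn : 1 ≤ n) :
    Finite (PBMonoid n) ∧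
      Nat.card (PBMonoid n) =
        ∑ k ∈ Finset.range (n + 1), ∑ m ∈ Finset.range (n + 1), ∑ t ∈ Finset.range (n + 1),
          if 2 * k + 2 * m + t ≤ n then
            (if m = 0 then 1 else 2) *
              (n.factorial ^ 2 /
                (k.factorial * 2 ^ k * (t + 2 * m).factorial * (k + m).factorial *
                  2 ^ (k + m) * t.factorial * (n - 2 * k - 2 * m - t).factorial))
          else 0 := by
  refine ⟨.of_equiv _ Diagram.equivPBMonoid, ?_⟩
  rw [← Nat.card_congr Diagram.equivPBMonoid, Nat.card_eq_fintype_card]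
  exact card_diagram_eq_sum_div (Fintype.card_fin n)
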